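/- Let g be a complex simple Lie algebra and G = Aut(g)⁰ its adjoint group acting on V = g by the adjoint representation. Then G is a normal subgroup of G', the quotient G'/G has order 2, and G'/G is generated by the coset of the linear map −ψ, where ψ is the Chevalley involution of g. In particular −ψ ∈ G' and −ψ ∉ G. -/

import Mathlib

noncomputable section

/-- A function `V → ℂ` is a polynomial function if it lies in the subalgebra of
functions generated by the linear functionals, i.e. it is given by a polynomial
in linear coordinates. -/
def IsPolyFun {V : Type*} [AddCommGroup V] [Module ℂ V] (f : V → ℂ) : Prop :=
  f ∈ Algebra.adjoin ℂ (Set.range fun l : V →ₗ[ℂ] ℂ => (l : V → ℂ))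

/-- Given a subgroup `G` of `GL(V)`, the group `G'` of all linear automorphisms of `V`
preserving every `G`-invariant polynomial function on `V`. -/
def primeGroup {V : Type*} [AddCommGroup V] [Module ℂ V]
    (G : Subgroup (V ≃ₗ[ℂ] V)) : Subgroup (V ≃ₗ[ℂ] V) where
  carrier := {φ | ∀ f : V → ℂ, IsPolyFun f →
      (∀ g ∈ G, ∀ v : V, f (g v) = f v) → ∀ v : V, f (φ v) = f v}
  one_mem' := by intro f _ _ v; rfl
  mul_mem' := by
    intro a b ha hb f hf hinv v
    have h2 : f (a (b v)) = f (b v) := ha f hf hinv (b v)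
    exact h2.trans (hb f hf hinv v)
  inv_mem' := by
    intro a ha f hf hinv v
    have h := ha f hf hinv (a⁻¹ v)
    have : a (a⁻¹ v) = v := a.apply_symm_apply v
    rw [this] at h
    exact h.symm

/-- The algebraic exponential of an endomorphism of a finite-dimensional space
(intended for nilpotent endomorphisms, where the series is a finite sum). -/
def endExp {g : Type*} [AddCommGroup g] [Module ℂ g] [FiniteDimensional ℂ g]
    (A : Module.End ℂ g) : Module.End ℂ g :=
  ∑ k ∈ Finset.range (Module.finrank ℂ g + 1), (k.factorial : ℂ)⁻¹ • A ^ k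

/-- The adjoint group `G = Aut(g)⁰` of a semisimple Lie algebra `g`: the subgroup of
`GL(g)` generated by the exponentials of nilpotent inner derivations `ad x`. -/
def adjointGroup (g : Type*) [LieRing g] [LieAlgebra ℂ g] [FiniteDimensional ℂ g] :
    Subgroup (g ≃ₗ[ℂ] g) :=
  Subgroup.closure {u : g ≃ₗ[ℂ] g | ∃ x : g,
    IsNilpotent (LieAlgebra.ad ℂ g x) ∧ (u : g →ₗ[ℂ] g) = endExp (LieAlgebra.ad ℂ g x)}

/-- The subgroup of `GL(g)` fixing a subalgebra `t` pointwise. -/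
def pointwiseStab {g : Type*} [LieRing g] [LieAlgebra ℂ g]
    (t : LieSubalgebra ℂ g) : Subgroup (g ≃ₗ[ℂ] g) where
  carrier := {u | ∀ x ∈ t, u x = x}
  one_mem' := by intro x _; rfl
  mul_mem' := by
    intro a b ha hb x hx
    have : a (b x) = a x := by rw [hb x hx]
    exact this.trans (ha x hx)
  inv_mem' := by
    intro a ha x hx
    conv_lhs => rw [← ha x hx]
    exact a.symm_apply_apply x

/-- The maximal torus of the adjoint group corresponding to a Cartan subalgebra `t`:
the elements of the adjoint group acting trivially on `t`. -/
def maximalTorus (g : Type*) [LieRing g] [LieAlgebra ℂ g] [FiniteDimensional ℂ g]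
    (t : LieSubalgebra ℂ g) : Subgroup (g ≃ₗ[ℂ] g) :=
  adjointGroup g ⊓ pointwiseStab t


noncomputable section

/-- A linear automorphism which is a Lie algebra automorphism. -/
def IsLieAut {g : Type*} [LieRing g] [LieAlgebra ℂ g] (u : g ≃ₗ[ℂ] g) : Prop :=
  ∀ x y : g, u ⁅x, y⁆ = ⁅u x, u y⁆

section GroupBasics
variable {g : Type*} [LieRing g] [LieAlgebra ℂ g]

lemma IsLieAut.mul {a b : g ≃ₗ[ℂ] g} (ha : IsLieAut a) (hb : IsLieAut b) : IsLieAut (a * b) := by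
  intro x y
  change a (b _) = ⁅a (b x), a (b y)⁆
  rw [hb, ha]

lemma IsLieAut.inv {a : g ≃ₗ[ℂ] g} (ha : IsLieAut a) : IsLieAut a⁻¹ := by
  intro x y
  change a.symm _ = ⁅a.symm x, a.symm y⁆
  rw [LinearEquiv.symm_apply_eq, ha]
  simp

lemma IsLieAut.one : IsLieAut (1 : g ≃ₗ[ℂ] g) := fun _ _ => rfl

lemma inv_apply_self' (a : g ≃ₗ[ℂ] g) (x : g) : a⁻¹ (a x) = x := a.symm_apply_apply x
lemma apply_inv_self' (a : g ≃ₗ[ℂ] g) (x : g) : a (a⁻¹ x) = x := a.apply_symm_apply x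
lemma mul_apply' (a b : g ≃ₗ[ℂ] g) (x : g) : (a * b) x = a (b x) := rfl

/-- conjugation of `ad`. -/
lemma IsLieAut.conj_ad {a : g ≃ₗ[ℂ] g} (ha : IsLieAut a) (x : g) :
    LieAlgebra.ad ℂ g (a x) = a.conj (LieAlgebra.ad ℂ g x) := by
  ext y
  rw [LinearEquiv.conj_apply_apply]
  simp [ha _ _]

variable [FiniteDimensional ℂ g]

lemma endExp_eq_exp {V : Type*} [AddCommGroup V] [Module ℂ V] [FiniteDimensional ℂ V]
    [Module ℚ V] {A : Module.End ℂ V} (hA : IsNilpotent A) : endExp A = IsNilpotent.exp A := by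
  have h : A ^ (Module.finrank ℂ V + 1) = 0 := by
    have := hA.charpoly_eq_X_pow_finrank
    have h2 := LinearMap.aeval_self_charpoly A
    rw [this] at h2
    simp at h2
    rw [pow_succ, h2, zero_mul]
  rw [IsNilpotent.exp_eq_sum h, endExp]
  refine Finset.sum_congr rfl fun k _ => ?_
  ext v
  simp only [LinearMap.smul_apply]
  rw [← Rat.cast_smul_eq_qsmul ℂ]
  simp

/-- The group element attached to a nilpotent `ad x`. -/
lemma exists_expAd {x : g} (hx : IsNilpotent (LieAlgebra.ad ℂ g x)) :
    ∃ u : g ≃ₗ[ℂ] g, u ∈ adjointGroup g ∧ IsLieAut u ∧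
      (u : g →ₗ[ℂ] g) = endExp (LieAlgebra.ad ℂ g x) := by
  letI : Module ℚ g := Module.compHom g (algebraMap ℚ ℂ)
  letI : LieAlgebra ℚ g :=
    { lie_smul := fun c y z => lie_smul ((algebraMap ℚ ℂ) c) y z }
  have had : (LieDerivation.ad ℂ g x).toLinearMap = LieAlgebra.ad ℂ g x := by
    ext y; simp
  have hx' : IsNilpotent (LieDerivation.ad ℂ g x).toLinearMap := by rwa [had]
  refine ⟨(LieDerivation.exp (LieDerivation.ad ℂ g x) hx').toLinearEquiv, ?_, ?_, ?_⟩
  · refine Subgroup.subset_closure ⟨x, hx, ?_⟩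
    rw [endExp_eq_exp hx, ← had]
    rfl
  · intro y z
    exact LieEquiv.map_lie _ _ _
  · rw [endExp_eq_exp hx, ← had]
    rfl

lemma isLieAut_of_mem {u : g ≃ₗ[ℂ] g} (hu : u ∈ adjointGroup g) : IsLieAut u := by
  induction hu using Subgroup.closure_induction with
  | mem u hu =>
    obtain ⟨x, hx, hu⟩ := hu
    obtain ⟨v, -, hv, hv2⟩ := exists_expAd hx
    have : u = v := LinearEquiv.toLinearMap_injective (hu.trans hv2.symm)
    rwa [this]
  | one => exact IsLieAut.one
  | mul a b _ _ ha hb => exact ha.mul hb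
  | inv a _ ha => exact ha.inv

lemma endExp_conj (a : g ≃ₗ[ℂ] g) (A : Module.End ℂ g) :
    endExp (a.conj A) = a.conj (endExp A) := by
  unfold endExp
  rw [map_sum]
  refine Finset.sum_congr rfl fun k _ => ?_
  rw [map_smul]
  congr 1
  exact (map_pow (LinearEquiv.conjAlgEquiv ℂ a) A k).symm

lemma conj_mem {a : g ≃ₗ[ℂ] g} (ha : IsLieAut a) {u : g ≃ₗ[ℂ] g} (hu : u ∈ adjointGroup g) :
    a * u * a⁻¹ ∈ adjointGroup g := by
  induction hu using Subgroup.closure_induction with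
  | mem u hu =>
    obtain ⟨x, hx, hu⟩ := hu
    refine Subgroup.subset_closure ⟨a x, ?_, ?_⟩
    · rw [ha.conj_ad]
      exact hx.map (LinearEquiv.conjAlgEquiv ℂ a)
    · rw [ha.conj_ad, endExp_conj, ← hu]
      rfl
  | one => simp
  | mul x y _ _ hx hy =>
    have := mul_mem hx hy
    convert this using 1
    group
  | inv x _ hx =>
    have := inv_mem hx
    convert this using 1
    group

end GroupBasics
end

noncomputable section
set_option linter.unusedSectionVars false
section PolyFun
variable {V : Type*} [AddCommGroup V] [Module ℂ V]

lemma IsPolyFun.linear (l : V →ₗ[ℂ] ℂ) : IsPolyFun (fun x => l x) :=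
  Algebra.subset_adjoin ⟨l, rfl⟩

lemma IsPolyFun.const (c : ℂ) : IsPolyFun (fun _ : V => c) :=
  (Algebra.adjoin ℂ (Set.range fun l : V →ₗ[ℂ] ℂ => (l : V → ℂ))).algebraMap_mem c

lemma IsPolyFun.add {f h : V → ℂ} (hf : IsPolyFun f) (hh : IsPolyFun h) :
    IsPolyFun (fun x => f x + h x) :=
  Subalgebra.add_mem _ hf hh

lemma IsPolyFun.sub {f h : V → ℂ} (hf : IsPolyFun f) (hh : IsPolyFun h) :
    IsPolyFun (fun x => f x - h x) :=
  Subalgebra.sub_mem _ hf hh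

lemma IsPolyFun.mul {f h : V → ℂ} (hf : IsPolyFun f) (hh : IsPolyFun h) :
    IsPolyFun (fun x => f x * h x) :=
  Subalgebra.mul_mem _ hf hh

lemma IsPolyFun.pow {f : V → ℂ} (hf : IsPolyFun f) (n : ℕ) :
    IsPolyFun (fun x => f x ^ n) :=
  Subalgebra.pow_mem _ hf n

lemma IsPolyFun.sum {ι : Type*} {s : Finset ι} {f : ι → V → ℂ} (hf : ∀ i ∈ s, IsPolyFun (f i)) :
    IsPolyFun (fun x => ∑ i ∈ s, f i x) := by
  have := Subalgebra.sum_mem (Algebra.adjoin ℂ (Set.range fun l : V →ₗ[ℂ] ℂ => (l : V → ℂ))) hf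
  convert this using 1
  unfold IsPolyFun
  congr! 1
  ext x; simp

lemma IsPolyFun.prod {ι : Type*} {s : Finset ι} {f : ι → V → ℂ} (hf : ∀ i ∈ s, IsPolyFun (f i)) :
    IsPolyFun (fun x => ∏ i ∈ s, f i x) := by
  have := Subalgebra.prod_mem (Algebra.adjoin ℂ (Set.range fun l : V →ₗ[ℂ] ℂ => (l : V → ℂ))) hf
  convert this using 1
  unfold IsPolyFun
  congr! 1
  ext x; simp

/-- induction principle -/
lemma IsPolyFun.induct {p : (f : V → ℂ) → IsPolyFun f → Prop}
    (hc : ∀ c, p (fun _ => c) (.const c)) (hl : ∀ l : V →ₗ[ℂ] ℂ, p (fun x => l x) (.linear l))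
    (ha : ∀ f h (hf : IsPolyFun f) (hh : IsPolyFun h), p f hf → p h hh →
      p (fun x => f x + h x) (hf.add hh))
    (hm : ∀ f h (hf : IsPolyFun f) (hh : IsPolyFun h), p f hf → p h hh →
      p (fun x => f x * h x) (hf.mul hh))
    {f : V → ℂ} (hf : IsPolyFun f) : p f hf := by
  exact Algebra.adjoin_induction (p := fun f hf => p f hf)
    (fun x hx => by obtain ⟨l, rfl⟩ := hx; exact hl l) (fun r => hc r)
    (fun x y hx hy h1 h2 => ha _ _ hx hy h1 h2) (fun x y hx hy h1 h2 => hm _ _ hx hy h1 h2) hf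

lemma IsPolyFun.comp_linear {W : Type*} [AddCommGroup W] [Module ℂ W] {f : V → ℂ}
    (hf : IsPolyFun f) (L : W →ₗ[ℂ] V) : IsPolyFun (fun x => f (L x)) := by
  induction hf using IsPolyFun.induct with
  | hc c => exact .const c
  | hl l => exact .linear (l ∘ₗ L)
  | ha f h _ _ h1 h2 => exact h1.add h2
  | hm f h _ _ h1 h2 => exact h1.mul h2

lemma IsPolyFun.of_mvPolynomial {ι : Type*} (p : MvPolynomial ι ℂ) (c : ι → V →ₗ[ℂ] ℂ) :
    IsPolyFun (fun x => MvPolynomial.eval (fun i => c i x) p) := by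
  induction p using MvPolynomial.induction_on with
  | C a => simpa using IsPolyFun.const a
  | add p q hp hq => simpa using hp.add hq
  | mul_X p i hp => simpa using hp.mul (.linear (c i))

lemma IsPolyFun.line {f : V → ℂ} (hf : IsPolyFun f) (x v : V) :
    ∃ p : Polynomial ℂ, ∀ s : ℂ, f (x + s • v) = p.eval s := by
  induction hf using IsPolyFun.induct with
  | hc c => exact ⟨Polynomial.C c, by simp⟩
  | hl l => exact ⟨Polynomial.C (l x) + Polynomial.X * Polynomial.C (l v), fun s => by simp; ring⟩
  | ha f h _ _ h1 h2 =>
    obtain ⟨p, hp⟩ := h1; obtain ⟨q, hq⟩ := h2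
    exact ⟨p + q, fun s => by simp [hp, hq]⟩
  | hm f h _ _ h1 h2 =>
    obtain ⟨p, hp⟩ := h1; obtain ⟨q, hq⟩ := h2
    exact ⟨p * q, fun s => by simp [hp, hq]⟩

lemma IsPolyFun.eq_zero_of_mul {f d : V → ℂ} (hf : IsPolyFun f) (hd : IsPolyFun d)
    (h : ∀ x, d x ≠ 0 → f x = 0) {y : V} (hy : d y ≠ 0) (x : V) : f x = 0 := by
  obtain ⟨p, hp⟩ := hf.line x (y - x)
  obtain ⟨q, hq⟩ := hd.line x (y - x)
  have hq0 : q ≠ 0 := by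
    rintro rfl
    have := hq 1
    simp at this
    exact hy this
  have hpq : p * q = 0 := by
    apply Polynomial.funext
    intro s
    rw [Polynomial.eval_mul, ← hp, ← hq]
    by_cases hs : d (x + s • (y - x)) = 0
    · simp [hs]
    · simp [h _ hs]
  have hp0 : p = 0 := by
    rcases mul_eq_zero.1 hpq with h | h
    · exact h
    · exact absurd h hq0
  have := hp 0
  simpa [hp0] using this

end PolyFun

section PolyFunNormed
variable {V : Type*} [NormedAddCommGroup V] [NormedSpace ℂ V] [FiniteDimensional ℂ V]

lemma IsPolyFun.differentiable {f : V → ℂ} (hf : IsPolyFun f) : Differentiable ℂ f := by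
  induction hf using IsPolyFun.induct with
  | hc c => fun_prop
  | hl l => exact (LinearMap.toContinuousLinearMap l).differentiable
  | ha f h _ _ h1 h2 => exact h1.add h2
  | hm f h _ _ h1 h2 => exact h1.mul h2

/-- polynomial growth -/
def PolyGrowth (f : V → ℂ) : Prop := ∃ C : ℝ, ∃ N : ℕ, 0 ≤ C ∧ ∀ x, ‖f x‖ ≤ C * (1 + ‖x‖) ^ N

lemma PolyGrowth.mul {f h : V → ℂ} (hf : PolyGrowth f) (hh : PolyGrowth h) :
    PolyGrowth (fun x => f x * h x) := by
  obtain ⟨C, N, hC, hf⟩ := hf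
  obtain ⟨D, M, hD, hh⟩ := hh
  refine ⟨C * D, N + M, by positivity, fun x => ?_⟩
  rw [norm_mul, pow_add]
  calc _ ≤ (C * (1 + ‖x‖) ^ N) * (D * (1 + ‖x‖) ^ M) :=
        mul_le_mul (hf x) (hh x) (norm_nonneg _) (by positivity)
    _ = _ := by ring

lemma PolyGrowth.add {f h : V → ℂ} (hf : PolyGrowth f) (hh : PolyGrowth h) :
    PolyGrowth (fun x => f x + h x) := by
  obtain ⟨C, N, hC, hf⟩ := hf
  obtain ⟨D, M, hD, hh⟩ := hh
  refine ⟨C + D, N + M, by positivity, fun x => ?_⟩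
  have h1 : (1 : ℝ) ≤ 1 + ‖x‖ := by linarith [norm_nonneg x]
  have h2 : (1 + ‖x‖) ^ N ≤ (1 + ‖x‖) ^ (N + M) := pow_le_pow_right₀ h1 (by omega)
  have h3 : (1 + ‖x‖) ^ M ≤ (1 + ‖x‖) ^ (N + M) := pow_le_pow_right₀ h1 (by omega)
  calc _ ≤ ‖f x‖ + ‖h x‖ := norm_add_le _ _
    _ ≤ C * (1 + ‖x‖) ^ N + D * (1 + ‖x‖) ^ M := add_le_add (hf x) (hh x)
    _ ≤ C * (1 + ‖x‖) ^ (N+M) + D * (1 + ‖x‖) ^ (N+M) := by gcongr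
    _ = _ := by ring

lemma PolyGrowth.const (c : ℂ) : PolyGrowth (fun _ : V => c) := ⟨‖c‖, 0, norm_nonneg _, by simp⟩

lemma IsPolyFun.growth {f : V → ℂ} (hf : IsPolyFun f) : PolyGrowth f := by
  induction hf using IsPolyFun.induct with
  | hc c => exact .const c
  | hl l =>
    refine ⟨‖LinearMap.toContinuousLinearMap l‖, 1, norm_nonneg _, fun x => ?_⟩
    have := (LinearMap.toContinuousLinearMap l).le_opNorm x
    refine this.trans ?_
    rw [pow_one]
    gcongr
    linarith
  | ha f h _ _ h1 h2 => exact h1.add h2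
  | hm f h _ _ h1 h2 => exact h1.mul h2

lemma IsPolyFun.eq_zero_of_eventually {f : V → ℂ} (hf : IsPolyFun f) {x : V}
    (h : ∀ᶠ y in nhds x, f y = 0) (z : V) : f z = 0 := by
  obtain ⟨p, hp⟩ := hf.line x (z - x)
  have hc : Filter.Tendsto (fun s : ℂ => x + s • (z - x)) (nhds 0) (nhds x) := by
    have : Continuous (fun s : ℂ => x + s • (z - x)) := by fun_prop
    simpa using this.tendsto 0
  have h2 := hc.eventually h
  have hp0 : p = 0 := by
    apply Polynomial.eq_zero_of_infinite_isRoot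
    have : {s : ℂ | f (x + s • (z - x)) = 0} ∈ nhds (0:ℂ) := h2
    refine (infinite_of_mem_nhds (0:ℂ) this).mono fun s hs => ?_
    simpa [hp] using hs
  have := hp 1
  simpa [hp0] using this

/-- the complement of a polynomial zero set is preconnected -/
lemma IsPolyFun.isPreconnected {P : V → ℂ} (hP : IsPolyFun P) :
    IsPreconnected {x | P x ≠ 0} := by
  apply isPreconnected_of_forall_pair
  intro x hx y hy
  obtain ⟨p, hp⟩ := hP.line x (y - x)
  have hp0 : p ≠ 0 := by
    rintro rfl
    have := hp 0
    simp at this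
    exact hx this
  have hfin : {s : ℂ | p.IsRoot s}.Finite := Polynomial.finite_setOfPred_isRoot hp0
  have hconn : IsConnected ({s : ℂ | p.IsRoot s}ᶜ) :=
    hfin.countable.isConnected_compl_of_one_lt_rank (by simp)
  refine ⟨(fun s : ℂ => x + s • (y - x)) '' {s : ℂ | p.IsRoot s}ᶜ, ?_, ?_, ?_, ?_⟩
  · rintro _ ⟨s, hs, rfl⟩
    simpa [hp] using hs
  · exact ⟨0, by simpa [← hp] using hx, by simp⟩
  · exact ⟨1, by simpa [← hp] using hy, by simp⟩
  · refine hconn.isPreconnected.image _ ?_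
    fun_prop

end PolyFunNormed
end

noncomputable section
set_option linter.unusedSectionVars false

lemma entire_growth_one {f : ℂ → ℂ} (hf : Differentiable ℂ f) {C : ℝ} {N : ℕ} (hC : 0 ≤ C)
    (hg : ∀ z, ‖f z‖ ≤ C * (1 + ‖z‖) ^ N) :
    ∃ p : Polynomial ℂ, p.degree < N + 1 ∧ ∀ z, f z = p.eval z := by
  have hz : ∀ n, N < n → iteratedDeriv n f 0 = 0 := by
    intro n hn
    rw [← norm_le_zero_iff]
    have hb : ∀ R : ℝ, 1 ≤ R → ‖iteratedDeriv n f 0‖ ≤ (n.factorial * (C * 2 ^ N)) * R⁻¹ := by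
      intro R hR
      have hR0 : 0 < R := by linarith
      have h1 := Complex.norm_iteratedDeriv_le_of_forall_mem_sphere_norm_le n (c := (0:ℂ))
        (C := C * (1 + R) ^ N) hR0 hf.diffContOnCl (fun z hz => by
          have : ‖z‖ = R := by simpa using hz
          rw [← this]; exact hg z)
      refine h1.trans ?_
      have h2 : (1 + R) ^ N ≤ 2 ^ N * R ^ N := by
        rw [← mul_pow]; gcongr; linarith
      have h3 : R ^ (N + 1) ≤ R ^ n := pow_le_pow_right₀ hR hn
      rw [div_le_iff₀ (by positivity)]
      calc (n.factorial : ℝ) * (C * (1 + R) ^ N) ≤ n.factorial * (C * (2 ^ N * R ^ N)) := by gcongr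
        _ = (n.factorial * (C * 2 ^ N)) * R⁻¹ * R ^ (N + 1) := by
            rw [pow_succ]; field_simp
        _ ≤ _ := by gcongr
    have hl : Filter.Tendsto (fun R : ℝ => (n.factorial * (C * 2 ^ N)) * R⁻¹) Filter.atTop
        (nhds ((n.factorial * (C * 2 ^ N)) * 0)) :=
      tendsto_inv_atTop_zero.const_mul _
    rw [mul_zero] at hl
    exact ge_of_tendsto hl (Filter.eventually_atTop.2 ⟨1, hb⟩)
  refine ⟨∑ n ∈ Finset.range (N + 1), Polynomial.monomial n
    ((n.factorial : ℂ)⁻¹ * iteratedDeriv n f 0), ?_, ?_⟩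
  · refine lt_of_le_of_lt (Polynomial.degree_sum_le _ _) ?_
    rw [Finset.sup_lt_iff (by exact_mod_cast WithBot.bot_lt_coe _)]
    intro n hn
    refine lt_of_le_of_lt (Polynomial.degree_monomial_le _ _) ?_
    exact_mod_cast Finset.mem_range.1 hn
  · intro z
    have h1 := Complex.hasSum_taylorSeries_of_entire hf 0 z
    have h2 := hasSum_sum_of_ne_finset_zero (L := SummationFilter.unconditional ℕ) (s := Finset.range (N+1))
      (f := fun n : ℕ => (n.factorial : ℂ)⁻¹ • (z - 0) ^ n • iteratedDeriv n f 0) (by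
        intro n hn
        rw [hz n (by simpa using hn)]; simp)
    rw [h1.unique h2, Polynomial.eval_finsetSum]
    refine Finset.sum_congr rfl fun n _ => ?_
    simp
    ring

/-- Lagrange basis at the nodes `0..N`. -/
def lagr (N j : ℕ) : Polynomial ℂ := Lagrange.basis (Finset.range (N + 1)) (fun i => (i : ℂ)) j

lemma entire_growth_interp {f : ℂ → ℂ} (hf : Differentiable ℂ f) {C : ℝ} {N : ℕ} (hC : 0 ≤ C)
    (hg : ∀ z, ‖f z‖ ≤ C * (1 + ‖z‖) ^ N) (z : ℂ) :
    f z = ∑ j ∈ Finset.range (N + 1), (lagr N j).eval z * f j := by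
  obtain ⟨p, hd, hp⟩ := entire_growth_one hf hC hg
  have hinj : Set.InjOn (fun i : ℕ => (i : ℂ)) (Finset.range (N + 1)) := fun a _ b _ h => by
    simpa using h
  have := Lagrange.eq_interpolate (s := Finset.range (N + 1)) hinj (f := p) (by
    simpa using hd)
  rw [hp z]
  conv_lhs => rw [this]
  rw [Lagrange.interpolate_apply, Polynomial.eval_finsetSum]
  refine Finset.sum_congr rfl fun j _ => ?_
  simp [hp, lagr, mul_comm]

lemma isPolyFun_poly_comp {V : Type*} [AddCommGroup V] [Module ℂ V] (p : Polynomial ℂ)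
    (l : V →ₗ[ℂ] ℂ) : IsPolyFun (fun x => p.eval (l x)) := by
  induction p using Polynomial.induction_on' with
  | add p q hp hq => simpa using hp.add hq
  | monomial n a =>
    simpa using (IsPolyFun.const a).mul ((IsPolyFun.linear l).pow n)

lemma isPolyFun_of_growth_pi {n : ℕ} (s : Finset (Fin n)) : ∀ F : (Fin n → ℂ) → ℂ,
    Differentiable ℂ F → PolyGrowth F → (∀ z w, (∀ i ∈ s, z i = w i) → F z = F w) →
    IsPolyFun F := by
  classical
  induction s using Finset.induction_on with
  | empty =>
    intro F _ _ h
    have : F = fun _ => F 0 := by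
      ext z; exact h _ _ (by simp)
    rw [this]; exact .const _
  | insert i s hi ih =>
    intro F hd hg h
    obtain ⟨C, N, hC, hg⟩ := hg
    have hup : ∀ (z : Fin n → ℂ) (c : ℂ), ‖Function.update z i c‖ ≤ ‖z‖ + ‖c‖ := by
      intro z c
      refine (pi_norm_le_iff_of_nonneg (by positivity)).2 fun k => ?_
      by_cases hk : k = i
      · subst hk; simp
      · rw [Function.update_of_ne hk]
        have := norm_le_pi_norm z k
        linarith [norm_nonneg c]
    have hbd : ∀ (z : Fin n → ℂ) (c : ℂ),
        ‖F (Function.update z i c)‖ ≤ C * ((1 + ‖z‖) ^ N * (1 + ‖c‖) ^ N) := by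
      intro z c
      refine (hg _).trans ?_
      rw [← mul_pow]
      have := hup z c
      have h2 : 0 ≤ ‖z‖ * ‖c‖ := by positivity
      gcongr
      nlinarith
    have key : ∀ z, F z = ∑ j ∈ Finset.range (N + 1), (lagr N j).eval (z i) *
        F (Function.update z i j) := by
      intro z
      have := entire_growth_interp (f := fun c => F (Function.update z i c)) (N := N)
        (C := C * (1 + ‖z‖) ^ N)
        (hd.comp (fun c => (hasFDerivAt_update z c).differentiableAt)) (by positivity)
        (fun c => by rw [mul_assoc]; exact hbd z c) (z i)
      simpa using this
    have : F = fun z => ∑ j ∈ Finset.range (N + 1), (lagr N j).eval (z i) *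
        F (Function.update z i j) := funext key
    rw [this]
    refine IsPolyFun.sum fun j _ => ?_
    refine (isPolyFun_poly_comp _ (LinearMap.proj i)).mul (ih _ ?_ ?_ ?_)
    · refine hd.comp ?_
      rw [differentiable_pi]
      intro k
      by_cases hk : k = i
      · subst hk; simp
      · simp [Function.update_of_ne hk]; fun_prop
    · refine ⟨C * (1 + ‖(j : ℂ)‖) ^ N, N, by positivity, fun z => ?_⟩
      refine (hbd z j).trans (le_of_eq (by ring))
    · intro z w hzw
      apply h
      intro k hk
      by_cases hk' : k = i
      · subst hk'; simp
      · rw [Function.update_of_ne hk', Function.update_of_ne hk']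
        exact hzw k (by simpa [hk'] using hk)

lemma isPolyFun_of_growth {V : Type*} [NormedAddCommGroup V] [NormedSpace ℂ V]
    [FiniteDimensional ℂ V] {F : V → ℂ} (hd : Differentiable ℂ F) (hg : PolyGrowth F) :
    IsPolyFun F := by
  let e : V ≃L[ℂ] (Fin (Module.finrank ℂ V) → ℂ) :=
    (Module.finBasis ℂ V).equivFun.toContinuousLinearEquiv
  have h1 : IsPolyFun (fun z => F (e.symm z)) := by
    refine isPolyFun_of_growth_pi Finset.univ _ (hd.comp e.symm.differentiable) ?_ ?_
    · obtain ⟨C, N, hC, hg⟩ := hg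
      refine ⟨C * (1 + ‖(e.symm : (Fin (Module.finrank ℂ V) → ℂ) →L[ℂ] V)‖) ^ N, N, by positivity, fun z => ?_⟩
      refine (hg _).trans ?_
      rw [mul_assoc, ← mul_pow]
      have h1 : ‖e.symm z‖ ≤ ‖(e.symm : (Fin (Module.finrank ℂ V) → ℂ) →L[ℂ] V)‖ * ‖z‖ :=
        (e.symm : (Fin (Module.finrank ℂ V) → ℂ) →L[ℂ] V).le_opNorm z
      have h2 := norm_nonneg (e.symm : (Fin (Module.finrank ℂ V) → ℂ) →L[ℂ] V)
      have h3 := norm_nonneg z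
      gcongr
      nlinarith
    · intro z w h
      have : z = w := funext fun i => h i (Finset.mem_univ i)
      rw [this]
  have := h1.comp_linear (W := V) (e : V →ₗ[ℂ] _)
  simpa using this
end

noncomputable section
set_option linter.unusedSectionVars false
section LocalLemma
variable {V : Type*} [NormedAddCommGroup V] [NormedSpace ℂ V] [FiniteDimensional ℂ V]
variable {E : Type*} [NormedAddCommGroup E] [NormedSpace ℂ E]

lemma endExp_zero {W : Type*} [AddCommGroup W] [Module ℂ W] [FiniteDimensional ℂ W] :
    endExp (0 : Module.End ℂ W) = 1 := by
  unfold endExp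
  rw [Finset.sum_eq_single 0]
  · simp
  · intro b _ hb; simp [hb]
  · simp

lemma endExp_smul_apply (A : Module.End ℂ V) : ∃ Q : ℂ × V → V, ContDiff ℂ 1 Q ∧
    ∀ c v, endExp (c • A) v = v + c • (A v + c • Q (c, v)) := by
  obtain hn | ⟨n, hn⟩ : Module.finrank ℂ V = 0 ∨ ∃ n, Module.finrank ℂ V = n + 1 := by
    rcases h : Module.finrank ℂ V with _ | n
    · exact Or.inl rfl
    · exact Or.inr ⟨n, rfl⟩
  · have : Subsingleton V := Module.finrank_zero_iff.1 hn
    exact ⟨fun _ => 0, contDiff_const, fun c v => Subsingleton.elim _ _⟩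
  · refine ⟨fun p => ∑ k ∈ Finset.range n, ((k + 2).factorial : ℂ)⁻¹ • p.1 ^ k •
      LinearMap.toContinuousLinearMap (A ^ (k + 2)) p.2, ?_, ?_⟩
    · refine ContDiff.sum fun k _ => ?_
      refine contDiff_const.smul ((contDiff_fst.pow k).smul ?_)
      exact (ContinuousLinearMap.contDiff _).comp contDiff_snd
    · intro c v
      unfold endExp
      rw [hn, Finset.sum_range_succ', Finset.sum_range_succ']
      simp only [LinearMap.add_apply, LinearMap.sum_apply, LinearMap.smul_apply, smul_pow,
        LinearMap.coe_toContinuousLinearMap']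
      simp only [smul_add, Finset.smul_sum]
      simp
      rw [add_comm, add_comm (c • A v)]
      congr 2
      refine Finset.sum_congr rfl fun k _ => ?_
      simp only [smul_smul]
      congr 1
      ring

lemma strict_endExp (A : Module.End ℂ V) {y : E → V} {y' : E →L[ℂ] V} {w0 : E}
    (hy : HasStrictFDerivAt y y' w0) (s : E →L[ℂ] ℂ) (hs : s w0 = 0) :
    HasStrictFDerivAt (fun w => endExp (s w • A) (y w)) (y' + s.smulRight (A (y w0))) w0 := by
  obtain ⟨Q, hQ, hE⟩ := endExp_smul_apply A
  simp only [hE]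
  have h1 : HasStrictFDerivAt (fun w => (s w, y w)) (s.prod y') w0 :=
    s.hasStrictFDerivAt.prodMk hy
  have h2 := ((hQ.contDiffAt (x := (s w0, y w0))).hasStrictFDerivAt (by simp)).comp w0 h1
  have h3 := (s.hasStrictFDerivAt (x := w0)).smul h2
  have h4 := ((LinearMap.toContinuousLinearMap A).hasStrictFDerivAt (x := y w0)).comp w0 hy
  have h5 := hy.add ((s.hasStrictFDerivAt (x := w0)).smul (h4.add h3))
  convert h5 using 1
  · ext w
    simp
  · ext w
    simp [hs]

lemma strict_prod (m : ℕ) : ∀ (A : Fin m → Module.End ℂ V) {y : E → V} {y' : E →L[ℂ] V} {w0 : E}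
    (_ : HasStrictFDerivAt y y' w0) (s : Fin m → E →L[ℂ] ℂ) (_ : ∀ i, s i w0 = 0),
    HasStrictFDerivAt (fun w => (List.ofFn fun i => endExp (s i w • A i)).prod (y w))
      (y' + ∑ i, (s i).smulRight (A i (y w0))) w0 := by
  induction m with
  | zero => intro A y y' w0 hy s hs; simpa using hy
  | succ m ih =>
    intro A y y' w0 hy s hs
    have h1 := ih (fun i => A i.succ) hy (fun i => s i.succ) (fun i => hs _)
    have h2 := strict_endExp (A 0) h1 (s 0) (hs 0)
    have h3 : (List.ofFn fun i : Fin m => endExp (s i.succ w0 • A i.succ)).prod (y w0) = y w0 := by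
      simp [hs, endExp_zero]
    rw [h3] at h2
    simp only [List.ofFn_succ, List.prod_cons, Module.End.mul_apply]
    convert h2 using 1
    rw [Fin.sum_univ_succ]
    abel

lemma local_lemma (T : Submodule ℂ V) {m : ℕ} (A : Fin m → Module.End ℂ V) {h : V} (hT : h ∈ T)
    (hb : Function.Bijective (fun p : T × (Fin m → ℂ) => (p.1 : V) + ∑ i, p.2 i • A i h)) :
    ∃ τ : V → V, DifferentiableAt ℂ τ h ∧ τ h = h ∧
      ∀ᶠ x in nhds h, τ x ∈ T ∧ ∃ c : Fin m → ℂ,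
        x = (List.ofFn fun i => endExp (c i • A i)).prod (τ x) := by
  let w0 : T × (Fin m → ℂ) := (⟨h, hT⟩, 0)
  let y' : T × (Fin m → ℂ) →L[ℂ] V := T.subtypeL.comp (ContinuousLinearMap.fst ℂ T (Fin m → ℂ))
  let s : Fin m → (T × (Fin m → ℂ) →L[ℂ] ℂ) := fun i =>
    (ContinuousLinearMap.proj i).comp (ContinuousLinearMap.snd ℂ T (Fin m → ℂ))
  have h1 := strict_prod m A (y'.hasStrictFDerivAt (x := w0)) s (fun i => by simp [s, w0])
  let e : (T × (Fin m → ℂ)) ≃ₗ[ℂ] V := LinearEquiv.ofBijective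
    ((y' + ∑ i, (s i).smulRight (A i (y' w0)) : T × (Fin m → ℂ) →L[ℂ] V) : _ →ₗ[ℂ] V) (by
      convert hb using 1
      ext p
      simp [y', s, w0])
  let f' := e.toContinuousLinearEquiv
  have hf' : (f' : T × (Fin m → ℂ) →L[ℂ] V) = y' + ∑ i, (s i).smulRight (A i (y' w0)) := by
    ext p <;> rfl
  rw [← hf'] at h1
  set Φ := (fun w => (List.ofFn fun i => endExp (s i w • A i)).prod (y' w)) with hΦ
  have hΦ0 : Φ w0 = h := by simp [hΦ, s, w0, endExp_zero, y']
  have h2 := h1.to_localInverse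
  have h3 := h1.eventually_right_inverse
  have h4 := h1.localInverse_apply_image
  rw [hΦ0] at h2 h3 h4
  refine ⟨fun x => y' (h1.localInverse Φ f' w0 x), ?_, ?_, ?_⟩
  · exact (y'.differentiableAt).comp h h2.hasFDerivAt.differentiableAt
  · beta_reduce; rw [h4]; rfl
  · filter_upwards [h3] with x hx
    refine ⟨(h1.localInverse Φ f' w0 x).1.2, fun i => s i (h1.localInverse Φ f' w0 x), ?_⟩
    conv_lhs => rw [← hx]
end LocalLemma
end

noncomputable section
set_option linter.unusedSectionVars false
set_option linter.style.haveILetI false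
section AbstractLemmas
variable {V : Type*} [AddCommGroup V] [Module ℂ V] [FiniteDimensional ℂ V]

/-- product of one-parameter exponentials -/
def expProd {m : ℕ} (A : Fin m → Module.End ℂ V) (c : Fin m → ℂ) : Module.End ℂ V :=
  (List.ofFn fun i => endExp (c i • A i)).prod

/-- `T` is transversal at `h` to the directions `A i h`. -/
def IsSlice (T : Submodule ℂ V) {m : ℕ} (A : Fin m → Module.End ℂ V) (h : V) : Prop :=
  h ∈ T ∧ Function.Bijective (fun p : T × (Fin m → ℂ) => (p.1 : V) + ∑ i, p.2 i • A i h)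

/-- coordinate norm -/
abbrev coordNorm (V : Type*) [AddCommGroup V] [Module ℂ V] [FiniteDimensional ℂ V] :
    NormedAddCommGroup V :=
  NormedAddCommGroup.induced V (Fin (Module.finrank ℂ V) → ℂ)
    ((Module.finBasis ℂ V).equivFun : V →ₗ[ℂ] (Fin (Module.finrank ℂ V) → ℂ))
    (Module.finBasis ℂ V).equivFun.injective

/-- coordinate normed space -/
abbrev coordNormedSpace (V : Type*) [AddCommGroup V] [Module ℂ V] [FiniteDimensional ℂ V] :
    @NormedSpace ℂ V _ (coordNorm V).toSeminormedAddCommGroup :=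
  letI := coordNorm V
  { norm_smul_le := fun a b => by
      change ‖(Module.finBasis ℂ V).equivFun (a • b)‖ ≤ ‖a‖ * ‖(Module.finBasis ℂ V).equivFun b‖
      rw [map_smul, norm_smul] }

lemma slice_density {P Q : V → ℂ} (hP : IsPolyFun P) (hQ : IsPolyFun Q) {y : V} (hy : P y ≠ 0)
    {T : Submodule ℂ V} {m : ℕ} {A : Fin m → Module.End ℂ V} {h : V} (hs : IsSlice T A h)
    (hh : Q h ≠ 0) : ∃ y ∈ T, ∃ c, Q y ≠ 0 ∧ P (expProd A c y) ≠ 0 := by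
  letI := coordNorm V
  letI := coordNormedSpace V
  obtain ⟨τ, h1, h2, h3⟩ := local_lemma T A hs.1 hs.2
  have h4 : ∀ᶠ x in nhds h, Q (τ x) ≠ 0 := by
    have : ContinuousAt (fun x => Q (τ x)) h :=
      (hQ.differentiable.continuous.continuousAt).comp h1.continuousAt
    exact this.eventually_ne (by rwa [h2])
  by_contra hcon
  push Not at hcon
  refine hy (hP.eq_zero_of_eventually (x := h) ?_ y)
  filter_upwards [h3, h4] with x ⟨hx, c, hc⟩ hx4
  have := hcon _ hx c hx4
  unfold expProd at this
  rwa [← hc] at this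

lemma slice_connected {P : V → ℂ} (hP : IsPolyFun P) (r : V → V → Prop)
    (hsymm : ∀ x y, r x y → r y x) (htrans : ∀ x y z, r x y → r y z → r x z)
    (H : ∀ x, P x ≠ 0 → ∃ (m : ℕ) (T : Submodule ℂ V) (A : Fin m → Module.End ℂ V),
      IsSlice T A x ∧ ∀ y ∈ T, P y ≠ 0 → ∀ c, r (expProd A c y) x) (x y : V) (hx : P x ≠ 0)
    (hy : P y ≠ 0) : r x y := by
  letI := coordNorm V
  letI := coordNormedSpace V
  refine hP.isPreconnected.induction₂ r ?_ ?_ ?_ hx hy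
  · intro x hx
    obtain ⟨m, T, A, hs, hr⟩ := H x hx
    obtain ⟨τ, h1, h2, h3⟩ := local_lemma T A hs.1 hs.2
    have h4 : ∀ᶠ z in nhds x, P (τ z) ≠ 0 := by
      have : ContinuousAt (fun x => P (τ x)) x :=
        (hP.differentiable.continuous.continuousAt).comp h1.continuousAt
      exact this.eventually_ne (by rwa [h2])
    apply Filter.Eventually.filter_mono nhdsWithin_le_nhds
    filter_upwards [h3, h4] with z ⟨hz, c, hc⟩ hz4
    apply hsymm
    have := hr _ hz hz4 c
    unfold expProd at this
    rwa [← hc] at this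
  · intro x y z _ _ _; exact htrans x y z
  · intro x y _ _; exact hsymm x y

lemma slice_poly {P F : V → ℂ} (hP : IsPolyFun P) {C : ℝ} {N : ℕ} (hC : 0 ≤ C)
    (hb : ∀ x, ‖F x‖ ≤ C * ‖P x‖ ^ 2 * (1 + ‖(Module.finBasis ℂ V).equivFun x‖) ^ N)
    (H : ∀ x, P x ≠ 0 → ∃ u : V ≃ₗ[ℂ] V, (∀ y, F (u y) = F y) ∧ ∃ h, x = u h ∧ P h ≠ 0 ∧
      ∃ (m : ℕ) (T : Submodule ℂ V) (A : Fin m → Module.End ℂ V) (f : V → ℂ),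
        IsSlice T A h ∧ IsPolyFun f ∧ ∀ y ∈ T, P y ≠ 0 → ∀ c, F (expProd A c y) = f y) :
    IsPolyFun F := by
  letI := coordNorm V
  letI := coordNormedSpace V
  have hb' : ∀ x, ‖F x‖ ≤ C * ‖P x‖ ^ 2 * (1 + ‖x‖) ^ N := hb
  refine isPolyFun_of_growth ?_ ?_
  · intro x
    by_cases hx : P x = 0
    · have hF0 : F x = 0 := by
        have := hb' x
        simpa [hx] using this
      have : HasFDerivAt F (0 : V →L[ℂ] ℂ) x := by
        rw [hasFDerivAt_iff_isLittleO]
        simp only [hF0, sub_zero, zero_apply]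
        have hPO : (fun z => P z) =O[nhds x] (fun z => z - x) := by
          have := (hP.differentiable x).isBigO_sub
          simpa [hx] using this
        have hPo : (fun z => P z) =o[nhds x] (fun _ => (1 : ℝ)) := by
          rw [Asymptotics.isLittleO_one_iff]
          have := hP.differentiable.continuous.tendsto x
          rwa [hx] at this
        have hbO : (fun z => C * (1 + ‖z‖) ^ N) =O[nhds x] (fun _ => (1 : ℝ)) := by
          have : Continuous (fun z : V => C * (1 + ‖z‖) ^ N) := by fun_prop
          exact (this.tendsto x).isBigO_one ℝ
        have h3 : F =O[nhds x] (fun z => (C * (1 + ‖z‖) ^ N) * (‖P z‖ * ‖P z‖)) := by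
          refine Asymptotics.IsBigO.of_bound 1 (Filter.Eventually.of_forall fun z => ?_)
          rw [one_mul, Real.norm_of_nonneg (by positivity)]
          refine (hb' z).trans (le_of_eq (by ring))
        refine h3.trans_isLittleO ?_
        have h4 := hbO.mul_isLittleO (hPo.norm_left.mul_isBigO hPO.norm_left.norm_right)
        simpa using h4.norm_right
      exact this.differentiableAt
    · obtain ⟨u, hu, h, rfl, hPh, m, T, A, f, hs, hf, hF⟩ := H x hx
      obtain ⟨τ, h1, h2, h3⟩ := local_lemma T A hs.1 hs.2
      have h4 : ∀ᶠ z in nhds h, P (τ z) ≠ 0 := by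
        have : ContinuousAt (fun x => P (τ x)) h :=
          (hP.differentiable.continuous.continuousAt).comp h1.continuousAt
        exact this.eventually_ne (by rwa [h2])
      have hd : DifferentiableAt ℂ F h := by
        have : DifferentiableAt ℂ (fun z => f (τ z)) h :=
          DifferentiableAt.comp h (hf.differentiable _) h1
        refine this.congr_of_eventuallyEq ?_
        filter_upwards [h3, h4] with z ⟨hz, c, hc⟩ hz4
        have := hF _ hz hz4 c
        unfold expProd at this
        rwa [← hc] at this
      let u' := u.toContinuousLinearEquiv
      have : F = fun z => F (u'.symm z) := by
        ext z
        have := hu (u.symm z)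
        rw [u.apply_symm_apply] at this
        exact this
      rw [this]
      have hz : u'.symm (u h) = h := u.symm_apply_apply h
      refine DifferentiableAt.comp (u h) ?_ u'.symm.differentiableAt
      rwa [hz]
  · have hg1 : PolyGrowth (fun x => P x * P x) := hP.growth.mul hP.growth
    obtain ⟨D, M, hD, hg⟩ := hg1
    refine ⟨C * D, N + M, by positivity, fun x => (hb' x).trans ?_⟩
    have := hg x
    rw [norm_mul] at this
    calc C * ‖P x‖ ^ 2 * (1 + ‖x‖) ^ N = C * (‖P x‖ * ‖P x‖) * (1 + ‖x‖) ^ N := by ring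
      _ ≤ C * (D * (1 + ‖x‖) ^ M) * (1 + ‖x‖) ^ N := by gcongr
      _ = _ := by rw [pow_add]; ring

/-- eigenvalues are bounded by the size of the argument -/
lemma eigenvalue_bound (L : V →ₗ[ℂ] Module.End ℂ V) : ∃ C : ℝ, 0 ≤ C ∧ ∀ (x v : V) (μ : ℂ), v ≠ 0 →
    L x v = μ • v → ‖μ‖ ≤ C * ‖(Module.finBasis ℂ V).equivFun x‖ := by
  letI := coordNorm V
  letI := coordNormedSpace V
  let B : V →ₗ[ℂ] (V →L[ℂ] V) := (LinearMap.toContinuousLinearMap : (V →ₗ[ℂ] V) ≃ₗ[ℂ] _) ∘ₗ L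
  let B' := LinearMap.toContinuousLinearMap B
  refine ⟨‖B'‖, B'.opNorm_nonneg, fun x v μ hv h => ?_⟩
  have h1 : ‖B' x v‖ ≤ ‖B'‖ * ‖x‖ * ‖v‖ := B'.le_opNorm₂ x v
  have h2 : B' x v = μ • v := h
  rw [h2, norm_smul] at h1
  exact le_of_mul_le_mul_right h1 (norm_pos_iff.2 hv)

end AbstractLemmas
end

noncomputable section
set_option linter.unusedSectionVars false

/-- Root space data of a Cartan subalgebra. -/
structure RootData (g : Type) [LieRing g] [LieAlgebra ℂ g] (t : LieSubalgebra ℂ g) where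
  ι : Type
  fin : Fintype ι
  dec : DecidableEq ι
  α : ι → t →ₗ[ℂ] ℂ
  e : ι → g
  f : ι → g
  co : ι → t
  abel : ∀ h h' : t, ⁅(h : g), (h' : g)⁆ = 0
  lie_e : ∀ (h : t) i, ⁅(h : g), e i⁆ = α i h • e i
  lie_f : ∀ (h : t) i, ⁅(h : g), f i⁆ = -(α i h) • f i
  lie_ef : ∀ i, ⁅e i, f i⁆ = co i
  α_co : ∀ i, α i (co i) = 2
  nil_e : ∀ i, IsNilpotent (LieAlgebra.ad ℂ g (e i))
  nil_f : ∀ i, IsNilpotent (LieAlgebra.ad ℂ g (f i))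
  α_inj : Function.Injective α
  bij : Function.Bijective (fun p : t × (ι → ℂ) => (p.1 : g) + ∑ i, p.2 i • e i)
  span_co : Submodule.span ℂ (Set.range co) = ⊤
  span_α : Submodule.span ℂ (Set.range α) = ⊤
  propor : ∀ i j (c : ℂ), α j = c • α i → j = i ∨ α j = -α i
  exists_neg : ∀ i, ∃ j, α j = -α i
  lie_ee : ∀ i j, α j = -α i → ∃ k : t, ⁅e i, e j⁆ = k ∧ α i k ≠ 0
  S : Set ι
  indep : LinearIndepOn ℂ α S
  induct : ∀ p : ι → Prop, (∀ i ∈ S, p i) → (∀ i k, α k = -α i → p i → p k) →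
    (∀ i j k, α k = α i - α i (co j) • α j → p i → j ∈ S → p k) → ∀ i, p i

attribute [instance] RootData.fin RootData.dec

open LieAlgebra LieAlgebra.IsKilling LieModule in
lemma exists_rootData (g : Type) [LieRing g] [LieAlgebra ℂ g] [FiniteDimensional ℂ g]
    [LieAlgebra.IsSimple ℂ g] (t : LieSubalgebra ℂ g) [t.IsCartanSubalgebra] :
    Nonempty (RootData g t) := by
  classical
  have hsl := fun i : t.root => exists_isSl2Triple_of_weight_isNonZero
    (LieSubalgebra.isNonZero_coe_root i)
  choose h e f hs he hf using hsl
  have hh : ∀ i, h i = coroot i.1 := fun i =>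
    (hs i).h_eq_coroot (LieSubalgebra.isNonZero_coe_root i) (he i) (hf i)
  have hne : ∀ i : t.root, (i.1 : t → ℂ) ≠ 0 := fun i => LieSubalgebra.isNonZero_coe_root i
  have hαinj : Function.Injective (fun i : t.root => (Weight.toLinear ℂ t g i.1)) := by
    intro i j hij
    ext x
    exact LinearMap.congr_fun hij x
  obtain ⟨b⟩ := (rootSystem t).nonempty_base
  have lie_e : ∀ (x : t) (i : t.root), ⁅(x : g), e i⁆ = (Weight.toLinear ℂ t g i.1) x • e i := fun x i =>
    lie_eq_smul_of_mem_rootSpace (he i) x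
  have α_co : ∀ i : t.root, (Weight.toLinear ℂ t g i.1) (coroot i.1) = 2 := fun i =>
      root_apply_coroot (LieSubalgebra.isNonZero_coe_root i)
  have indep_e : LinearIndependent ℂ e := by
    have h1 := iSupIndep_genWeightSpace' ℂ t g
    rw [← LieSubmodule.iSupIndep_toSubmodule] at h1
    have h2 := h1.comp (f := fun i : t.root => i.1) Subtype.val_injective
    exact h2.linearIndependent _ (fun i => he i) (fun i => (hs i).e_ne_zero)
  refine ⟨{ ι := t.root, fin := inferInstance, dec := inferInstance, α := fun i => (Weight.toLinear ℂ t g i.1)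
            e := e, f := f, co := fun i => coroot i.1, abel := ?_, lie_e := lie_e, lie_f := ?_,
            lie_ef := ?_, α_co := α_co, nil_e := ?_, nil_f := ?_, α_inj := hαinj, bij := ?_,
            span_co := ?_, span_α := ?_, propor := ?_, exists_neg := ?_, lie_ee := ?_
            S := b.support, indep := ?_, induct := ?_ }⟩
  · intro x y
    have := LieModule.IsTrivial.trivial x y
    exact congrArg Subtype.val this
  · intro x i
    exact lie_eq_smul_of_mem_rootSpace (hf i) x
  · intro i
    rw [(hs i).lie_e_f, hh]
  · intro i
    exact LieAlgebra.isNilpotent_ad_of_mem_rootSpace t (hne i) (he i)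
  · intro i
    exact LieAlgebra.isNilpotent_ad_of_mem_rootSpace t (neg_ne_zero.2 (hne i)) (hf i)
  · constructor
    · have key : ∀ (x : t) (c : t.root → ℂ), (x : g) + ∑ i, c i • e i = 0 → x = 0 ∧ c = 0 := by
        intro x c hxc
        have hc : c = 0 := by
          ext j
          have h1 := congrArg (fun z => ⁅((coroot j.1 : t) : g), z⁆) hxc
          simp only [lie_add, lie_zero, lie_sum, lie_smul, lie_e] at h1
          have h0 : ⁅((coroot j.1 : t) : g), (x : g)⁆ = 0 :=
            congrArg Subtype.val (LieModule.IsTrivial.trivial (coroot j.1 : t) x)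
          rw [h0, zero_add] at h1
          simp only [smul_smul] at h1
          have := Fintype.linearIndependent_iff.1 indep_e _ h1 j
          rw [α_co] at this
          simpa using this
        refine ⟨?_, hc⟩
        rw [hc] at hxc
        simpa using hxc
      rintro ⟨x, c⟩ ⟨y, d⟩ hxy
      have := key (x - y) (c - d) (by
        simp only [Pi.sub_apply, sub_smul, Finset.sum_sub_distrib]
        simp only at hxy
        push_cast
        rw [sub_add_sub_comm, hxy, sub_self])
      exact Prod.ext (sub_eq_zero.1 this.1) (sub_eq_zero.1 this.2)
    · intro y
      let Φ : (t × (t.root → ℂ)) →ₗ[ℂ] g := LinearMap.coprod t.toSubmodule.subtype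
        (Fintype.linearCombination ℂ e)
      have hΦ : ∀ p, Φ p = (p.1 : g) + ∑ i, p.2 i • e i := fun p => by
        simp [Φ, Fintype.linearCombination_apply]
        rfl
      have h1 := cartan_sup_iSup_rootSpace_eq_top (K := ℂ) (L := g) (H := t)
      have h2 : (⊤ : LieSubmodule ℂ t g).toSubmodule ≤ LinearMap.range Φ := by
        rw [← h1]
        rw [LieSubmodule.sup_toSubmodule, sup_le_iff]
        constructor
        · intro x hx
          exact ⟨(⟨x, hx⟩, 0), by simp [hΦ]⟩
        · simp only [LieSubmodule.iSup_toSubmodule]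
          refine iSup_le fun a => iSup_le fun ha => ?_
          intro x hx
          let i : t.root := ⟨a, by simpa using ha⟩
          have hfr := finrank_rootSpace_eq_one a ha
          have hei : e i ∈ rootSpace t a := he i
          obtain ⟨c, hc⟩ := (finrank_eq_one_iff_of_nonzero' (⟨e i, hei⟩ : rootSpace t a)
            (fun hcon => (hs i).e_ne_zero (congrArg Subtype.val hcon))).1 hfr ⟨x, hx⟩
          refine ⟨(0, Pi.single i c), ?_⟩
          rw [hΦ]
          have hc' : c • e i = x := congrArg Subtype.val hc
          simp only [ZeroMemClass.coe_zero, zero_add]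
          rw [Finset.sum_eq_single i]
          · simpa using hc'
          · intro j _ hj; simp [hj]
          · simp
      obtain ⟨p, hp⟩ := h2 (Submodule.mem_top : y ∈ (⊤ : LieSubmodule ℂ t g).toSubmodule)
      exact ⟨p, by rw [← hp, hΦ]⟩
  · exact RootPairing.IsRootSystem.span_coroot_eq_top (P := rootSystem t)
  · exact RootPairing.IsRootSystem.span_root_eq_top (P := rootSystem t)
  · intro i j c hc
    have := eq_neg_or_eq_of_eq_smul i.1 j.1 (LieSubalgebra.isNonZero_coe_root j) c (by
      ext x; exact LinearMap.congr_fun hc x)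
    rcases this with h | h
    · right; rw [h]; rfl
    · left; exact Subtype.ext h
  · intro i
    exact ⟨⟨-i.1, by simpa using (LieSubalgebra.isNonZero_coe_root i)⟩, rfl⟩
  · intro i j hij
    have hej : e j ∈ rootSpace t (-i.1 : t → ℂ) := by
      have : (j.1 : t → ℂ) = -i.1 := by ext x; exact LinearMap.congr_fun hij x
      rw [← this]; exact he j
    have h1 := lie_eq_killingForm_smul_of_mem_rootSpace_of_mem_rootSpace_neg (he i) hej
    refine ⟨killingForm ℂ g (e i) (e j) • (cartanEquivDual t).symm (Weight.toLinear ℂ t g i.1), h1, ?_⟩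
    rw [map_smul]
    refine mul_ne_zero ?_ (root_apply_cartanEquivDual_symm_ne_zero
      (LieSubalgebra.isNonZero_coe_root i))
    intro h0
    rw [h0, zero_smul] at h1
    -- `f i` is a multiple of `e j`
    have hfr := finrank_rootSpace_eq_one j.1 (LieSubalgebra.isNonZero_coe_root j)
    have hfi : f i ∈ rootSpace t j.1 := by
      have : (j.1 : t → ℂ) = -i.1 := by ext x; exact LinearMap.congr_fun hij x
      rw [this]; exact hf i
    obtain ⟨c, hc⟩ := (finrank_eq_one_iff_of_nonzero' (⟨e j, he j⟩ : rootSpace t j.1)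
            (fun hcon => (hs j).e_ne_zero (congrArg Subtype.val hcon))).1 hfr ⟨f i, hfi⟩
    have hc' : c • e j = f i := congrArg Subtype.val hc
    have h2 := (hs i).lie_e_f
    rw [← hc', lie_smul, h1, smul_zero] at h2
    exact (hs i).h_ne_zero h2.symm
  · exact b.linearIndepOn_root
  · intro p h1 h2 h3 i
    refine b.induction_reflect i (p := p) ?_ h1 ?_
    · intro i hi
      refine h2 i _ ?_ hi
      have := (rootSystem t).root_reflectionPerm i i
      rw [RootPairing.reflection_apply_self] at this
      exact this
    · intro i j hi hj
      refine h3 i j _ ?_ hi hj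
      have := (rootSystem t).root_reflectionPerm j i
      rw [RootPairing.reflection_apply_root] at this
      exact this
end

noncomputable section
set_option linter.unusedSectionVars false

section PartC
open LieAlgebra LieSubalgebra Module
variable {g : Type} [LieRing g] [LieAlgebra ℂ g] [FiniteDimensional ℂ g]

/-- The discriminant. -/
def disc (x : g) : ℂ := (ad ℂ g x).charpoly.coeff (rank ℂ g)

lemma disc_poly : IsPolyFun (disc : g → ℂ) := by
  let b := Module.finBasis ℂ g
  have := IsPolyFun.of_mvPolynomial (((ad ℂ g : g →ₗ[ℂ] Module.End ℂ g).polyCharpoly b).coeff (rank ℂ g))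
    (fun i => b.coord i)
  convert this using 1
  funext x
  rw [disc]
  have h := LinearMap.polyCharpoly_coeff_eval (φ := (ad ℂ g : g →ₗ[ℂ] Module.End ℂ g)) b x (rank ℂ g)
  exact h.symm

lemma disc_inv {a : g ≃ₗ[ℂ] g} (ha : IsLieAut a) (x : g) : disc (a x) = disc x := by
  rw [disc, ha.conj_ad, LinearEquiv.charpoly_conj, disc]

lemma exists_disc : ∃ x : g, disc x ≠ 0 := exists_isRegular ℂ g

lemma disc_iff (x : g) : disc x ≠ 0 ↔ finrank ℂ (engel ℂ x) = rank ℂ g :=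
  isRegular_iff_finrank_engel_eq_rank ℂ x

lemma engel_cartan {x : g} (hx : disc x ≠ 0) : (engel ℂ x).IsCartanSubalgebra := by
  refine ⟨?_, normalizer_engel _ _⟩
  apply isNilpotent_of_forall_le_engel
  intro y hy
  set Ex : {engel ℂ z | z ∈ engel ℂ x} := ⟨engel ℂ x, x, self_mem_engel _ _, rfl⟩
  suffices IsBot Ex from @this ⟨engel ℂ y, y, hy, rfl⟩
  have h : (finrank ℂ g : Cardinal) ≤ Cardinal.mk ℂ :=
    Cardinal.natCast_le_aleph0.trans <| Cardinal.infinite_iff.mp inferInstance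
  apply engel_isBot_of_isMin h (engel ℂ x) Ex le_rfl
  rintro ⟨_, y, hy, rfl⟩ hyx
  suffices finrank ℂ (engel ℂ x) ≤ finrank ℂ (engel ℂ y) by
    suffices engel ℂ y = engel ℂ x from this.ge
    apply LieSubalgebra.toSubmodule_injective
    exact Submodule.eq_of_le_of_finrank_le hyx this
  rw [(disc_iff x).mp hx]
  apply rank_le_finrank_engel

lemma engel_aut {a : g ≃ₗ[ℂ] g} (ha : IsLieAut a) (x z : g) :
    z ∈ engel ℂ x ↔ a z ∈ engel ℂ (a x) := by
  rw [mem_engel_iff, mem_engel_iff]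
  refine exists_congr fun n => ?_
  have : (ad ℂ g (a x) ^ n) (a z) = a ((ad ℂ g x ^ n) z) := by
    rw [ha.conj_ad, show a.conj (ad ℂ g x) ^ n = a.conj (ad ℂ g x ^ n) from
      (map_pow (LinearEquiv.conjAlgEquiv ℂ a) (ad ℂ g x) n).symm, LinearEquiv.conj_apply_apply]
    simp
  rw [this]
  simp

namespace RootData
variable {t : LieSubalgebra ℂ g} (R : RootData g t)

/-- root space decomposition -/
def equiv : (t × (R.ι → ℂ)) ≃ₗ[ℂ] g :=
  LinearEquiv.ofBijective
    (LinearMap.coprod (t.incl : t →ₗ[ℂ] g) (∑ i, (LinearMap.proj i).smulRight (R.e i))) (by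
      convert R.bij using 1
      funext p
      simp)

lemma equiv_apply (p : t × (R.ι → ℂ)) : R.equiv p = (p.1 : g) + ∑ i, p.2 i • R.e i := by
  simp [equiv]

/-- projection to the Cartan subalgebra -/
def proj : g →ₗ[ℂ] t := LinearMap.fst ℂ t (R.ι → ℂ) ∘ₗ R.equiv.symm.toLinearMap

lemma equiv_t (h : t) : R.equiv (h, 0) = h := by simp [equiv_apply]
lemma equiv_e (i : R.ι) : R.equiv (0, Pi.single i 1) = R.e i := by
  simp [equiv_apply, Pi.single_apply]

lemma proj_t (h : t) : R.proj (h : g) = h := by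
  rw [← R.equiv_t h]; simp [proj]

lemma proj_e (i : R.ι) : R.proj (R.e i) = 0 := by
  rw [← R.equiv_e i]; simp [proj]

lemma e_ne (i : R.ι) : R.e i ≠ 0 := by
  rw [← R.equiv_e i]
  intro h
  have := congrFun (congrArg Prod.snd ((LinearEquiv.map_eq_zero_iff _).1 h)) i
  simp at this

lemma e_not_mem (i : R.ι) : R.e i ∉ t := by
  intro h
  have := R.proj_t ⟨R.e i, h⟩
  simp only [proj_e] at this
  exact R.e_ne i (congrArg Subtype.val this).symm

lemma α_ne (i : R.ι) : R.α i ≠ 0 := by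
  intro h
  have := R.α_co i
  rw [h] at this
  simp at this

/-- induction on elements -/
lemma span_induct {p : g → Prop} (ht : ∀ h : t, p h) (he : ∀ i, p (R.e i))
    (hadd : ∀ x y, p x → p y → p (x + y)) (hsmul : ∀ (c : ℂ) x, p x → p (c • x)) (x : g) : p x := by
  obtain ⟨q, rfl⟩ := R.equiv.surjective x
  rw [equiv_apply]
  refine hadd _ _ (ht _) ?_
  have h0 : p 0 := by simpa using ht 0
  exact Finset.sum_induction _ p hadd h0 (fun i _ => hsmul _ _ (he i))

lemma ad_equiv (h : t) (p : t × (R.ι → ℂ)) :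
    ⁅(h : g), R.equiv p⁆ = R.equiv (0, fun i => p.2 i * R.α i h) := by
  rw [equiv_apply, equiv_apply, lie_add, R.abel, lie_sum]
  simp [R.lie_e, smul_smul]

lemma ad_pow_equiv (h : t) (p : t × (R.ι → ℂ)) (n : ℕ) :
    ((ad ℂ g (h : g)) ^ (n + 1)) (R.equiv p) = R.equiv (0, fun i => p.2 i * R.α i h ^ (n + 1)) := by
  induction n with
  | zero => simp [ad_equiv]
  | succ n ih =>
    rw [pow_succ', Module.End.mul_apply, ih, LieAlgebra.ad_apply, ad_equiv]
    congr 2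
    funext i
    ring

lemma t_le_engel (R : RootData g t) (h : t) : t ≤ engel ℂ (h : g) := by
  intro y hy
  rw [mem_engel_iff]
  exact ⟨1, by simpa using R.abel h ⟨y, hy⟩⟩

lemma engel_eq {h : t} (hh : ∀ i, R.α i h ≠ 0) : engel ℂ (h : g) = t := by
  refine le_antisymm ?_ (R.t_le_engel h)
  intro y hy
  rw [mem_engel_iff] at hy
  obtain ⟨n, hn⟩ := hy
  obtain ⟨p, rfl⟩ := R.equiv.surjective y
  have h2 : ((ad ℂ g (h : g)) ^ (n + 1)) (R.equiv p) = 0 := by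
    rw [pow_succ', Module.End.mul_apply, hn, map_zero]
  rw [R.ad_pow_equiv, LinearEquiv.map_eq_zero_iff] at h2
  have h3 : p.2 = 0 := by
    funext i
    have := congrFun (congrArg Prod.snd h2) i
    simpa [hh i] using this
  have : p = (p.1, 0) := by rw [← h3]
  rw [this, R.equiv_t]
  exact p.1.2

/-- root vectors indexed by `Fin` -/
def A (i : Fin (Fintype.card R.ι)) : Module.End ℂ g := ad ℂ g (R.e ((Fintype.equivFin R.ι).symm i))

lemma isSlice {h : t} (hh : ∀ i, R.α i h ≠ 0) : IsSlice t.toSubmodule R.A (h : g) := by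
  refine ⟨h.2, ?_⟩
  let E : (t × (Fin (Fintype.card R.ι) → ℂ)) ≃ (t × (R.ι → ℂ)) :=
    (Equiv.refl t).prodCongr (((Fintype.equivFin R.ι).symm.arrowCongr (Equiv.refl ℂ)).trans
      (Equiv.piCongrRight fun i => Equiv.mulRight₀ (-(R.α i h)) (neg_ne_zero.2 (hh i))))
  have := R.equiv.bijective.comp E.bijective
  suffices h : (fun p : t × (Fin (Fintype.card R.ι) → ℂ) => (p.1 : g) + ∑ i, p.2 i • R.A i h) =
      R.equiv ∘ E from h ▸ this
  funext p
  simp only [Function.comp, equiv_apply]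
  congr 1
  rw [← (Fintype.equivFin R.ι).symm.sum_comp]
  refine Finset.sum_congr rfl fun i _ => ?_
  simp only [A, LieAlgebra.ad_apply]
  rw [← lie_skew, R.lie_e, ← neg_smul, smul_smul]
  simp [E]

lemma expProd_mem (c : Fin (Fintype.card R.ι) → ℂ) :
    ∃ u ∈ adjointGroup g, (u : g →ₗ[ℂ] g) = expProd R.A c := by
  have key : ∀ l : List (Module.End ℂ g), (∀ B ∈ l, ∃ u ∈ adjointGroup g, (u : g →ₗ[ℂ] g) = B) →
      ∃ u ∈ adjointGroup g, (u : g →ₗ[ℂ] g) = l.prod := by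
    intro l
    induction l with
    | nil => exact fun _ => ⟨1, one_mem _, rfl⟩
    | cons B l ih =>
      intro h
      obtain ⟨u, hu, hu'⟩ := h B (by simp)
      obtain ⟨v, hv, hv'⟩ := ih (fun C hC => h C (by simp [hC]))
      refine ⟨u * v, mul_mem hu hv, ?_⟩
      rw [List.prod_cons, ← hu', ← hv']
      rfl
  apply key
  intro B hB
  rw [List.mem_ofFn] at hB
  obtain ⟨i, rfl⟩ := hB
  have hn : IsNilpotent (ad ℂ g (c i • (R.e ((Fintype.equivFin R.ι).symm i)))) := by
    rw [map_smul]
    exact (R.nil_e _).smul _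
  obtain ⟨u, hu, -, hu'⟩ := exists_expAd hn
  refine ⟨u, hu, ?_⟩
  rw [hu', map_smul]
  rfl

lemma exists_generic : ∃ h : t, ∀ i, R.α i h ≠ 0 := by
  have := Module.Dual.exists_forall_ne_zero_of_forall_exists (K := ℂ) (M := t) (f := R.α)
    (fun i => ⟨R.co i, by rw [R.α_co]; norm_num⟩)
  exact this

lemma finrank_eq (R : RootData g t) : finrank ℂ t = rank ℂ g := by
  obtain ⟨h, hh⟩ := R.exists_generic
  obtain ⟨x, hx⟩ := exists_disc (g := g)
  have hQ : IsPolyFun (fun x : g => ∏ i, R.α i (R.proj x)) :=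
    IsPolyFun.prod fun i _ => IsPolyFun.linear (R.α i ∘ₗ R.proj)
  obtain ⟨y, hy, c, hy1, hy2⟩ := slice_density disc_poly hQ hx (R.isSlice hh)
    (by simpa [proj_t, Finset.prod_ne_zero_iff] using hh)
  obtain ⟨u, hu, hu'⟩ := R.expProd_mem c
  rw [← hu'] at hy2
  have hd : disc y ≠ 0 := by
    rw [← disc_inv (isLieAut_of_mem hu)]; exact hy2
  have hy3 : ∀ i, R.α i ⟨y, hy⟩ ≠ 0 := by
    have := R.proj_t ⟨y, hy⟩
    simp only at this
    rw [this] at hy1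
    simpa [Finset.prod_ne_zero_iff] using hy1
  have h4 := R.engel_eq hy3
  rw [disc_iff] at hd
  simp only at h4
  rw [← hd, h4]

lemma disc_iff {h : t} : disc (h : g) ≠ 0 ↔ ∀ i, R.α i h ≠ 0 := by
  constructor
  · intro hd i hi
    rw [_root_.disc_iff, ← R.finrank_eq] at hd
    have h1 : t.toSubmodule = (engel ℂ (h : g)).toSubmodule :=
      Submodule.eq_of_le_of_finrank_eq (R.t_le_engel h) hd.symm
    apply R.e_not_mem i
    change R.e i ∈ t.toSubmodule
    rw [h1]
    change R.e i ∈ engel ℂ (h : g)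
    rw [mem_engel_iff]
    exact ⟨1, by simp [R.lie_e, hi]⟩
  · intro hh
    rw [_root_.disc_iff, R.engel_eq hh, R.finrank_eq]

lemma engel_of_disc (R : RootData g t) {h : t} (hd : disc (h : g) ≠ 0) : engel ℂ (h : g) = t :=
  R.engel_eq (R.disc_iff.1 hd)

end RootData

variable [LieAlgebra.IsSimple ℂ g]

lemma engel_conj {x y : g} (hx : disc x ≠ 0) (hy : disc y ≠ 0) :
    ∃ u ∈ adjointGroup g, ∀ z, z ∈ engel ℂ x ↔ u z ∈ engel ℂ y := by
  refine slice_connected disc_poly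
    (fun x y : g => ∃ u ∈ adjointGroup g, ∀ z, z ∈ engel ℂ x ↔ u z ∈ engel ℂ y) ?_ ?_ ?_ x y hx hy
  · rintro x y ⟨u, hu, h⟩
    exact ⟨u⁻¹, inv_mem hu, fun z => by rw [h, apply_inv_self']⟩
  · rintro x y z ⟨u, hu, h⟩ ⟨v, hv, h'⟩
    exact ⟨v * u, mul_mem hv hu, fun w => by rw [h, h', mul_apply']⟩
  · intro x hx
    have := engel_cartan hx
    obtain ⟨R⟩ := exists_rootData g (engel ℂ x)
    have hx' : x ∈ engel ℂ x := self_mem_engel _ _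
    refine ⟨_, _, R.A, R.isSlice (h := ⟨x, hx'⟩) (R.disc_iff.1 hx), ?_⟩
    intro y hy hd c
    obtain ⟨u, hu, hu'⟩ := R.expProd_mem c
    rw [← hu']
    refine ⟨u⁻¹, inv_mem hu, fun z => ?_⟩
    have h1 : engel ℂ y = engel ℂ x := R.engel_of_disc (h := ⟨y, hy⟩) hd
    rw [← h1, engel_aut (isLieAut_of_mem hu) y, apply_inv_self']
    rfl

lemma exists_conj_mem (t : LieSubalgebra ℂ g) [t.IsCartanSubalgebra] {x : g} (hx : disc x ≠ 0) :
    ∃ u ∈ adjointGroup g, u x ∈ t := by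
  obtain ⟨R⟩ := exists_rootData g t
  obtain ⟨h, hh⟩ := R.exists_generic
  have hd := R.disc_iff.2 hh
  obtain ⟨u, hu, h1⟩ := engel_conj hx hd
  refine ⟨u, hu, ?_⟩
  have := (h1 x).1 (self_mem_engel _ _)
  rwa [R.engel_of_disc hd] at this

end PartC
end

noncomputable section
set_option linter.unusedSectionVars false

section PartG
open LieAlgebra LieSubalgebra Module
variable {g : Type} [LieRing g] [LieAlgebra ℂ g] [FiniteDimensional ℂ g]

lemma endExp_apply_three {V : Type*} [AddCommGroup V] [Module ℂ V] [FiniteDimensional ℂ V]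
    {A : Module.End ℂ V} (hA : IsNilpotent A) (v : V) (h3 : A (A (A v)) = 0) :
    endExp A v = v + A v + (2 : ℂ)⁻¹ • A (A v) := by
  have h : A ^ (Module.finrank ℂ V) = 0 := by
    have := hA.charpoly_eq_X_pow_finrank
    have h2 := LinearMap.aeval_self_charpoly A
    rw [this] at h2
    simpa using h2
  have h1 : endExp A v = ∑ k ∈ Finset.range (Module.finrank ℂ V + 3),
      (k.factorial : ℂ)⁻¹ • (A ^ k) v := by
    rw [endExp, LinearMap.sum_apply]
    simp only [LinearMap.smul_apply]
    refine Finset.sum_subset (Finset.range_mono (by omega)) fun k _ hk => ?_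
    have : A ^ k = 0 := pow_eq_zero_of_le (by simp at hk; omega) h
    simp [this]
  have h2 : ∑ k ∈ Finset.range 3, (k.factorial : ℂ)⁻¹ • (A ^ k) v =
      ∑ k ∈ Finset.range (Module.finrank ℂ V + 3), (k.factorial : ℂ)⁻¹ • (A ^ k) v := by
    refine Finset.sum_subset (Finset.range_mono (by omega)) fun k _ hk => ?_
    obtain ⟨m, rfl⟩ : ∃ m, k = m + 3 := ⟨k - 3, by simp at hk; omega⟩
    rw [pow_add, Module.End.mul_apply]
    have : (A ^ 3) v = 0 := by simpa [pow_succ] using h3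
    simp [this]
  rw [h1, ← h2]
  simp [Finset.sum_range_succ, pow_succ]

lemma tcoe_sub {t : LieSubalgebra ℂ g} (a b : t) : ((a - b : t) : g) = a - b := rfl
lemma tcoe_add {t : LieSubalgebra ℂ g} (a b : t) : ((a + b : t) : g) = a + b := rfl
lemma tcoe_neg {t : LieSubalgebra ℂ g} (a : t) : ((-a : t) : g) = -a := rfl
lemma tcoe_smul {t : LieSubalgebra ℂ g} (c : ℂ) (a : t) : ((c • a : t) : g) = c • (a : g) := rfl

namespace RootData
variable {t : LieSubalgebra ℂ g} (R : RootData g t)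

/-- torus elements -/
def tor (h : t) : g ≃ₗ[ℂ] g :=
  R.equiv.symm ≪≫ₗ ((LinearEquiv.refl ℂ t).prodCongr
    (LinearEquiv.piCongrRight fun i => LinearEquiv.smulOfNeZero ℂ ℂ (Complex.exp (R.α i h))
      (Complex.exp_ne_zero _))) ≪≫ₗ R.equiv

lemma tor_equiv (h : t) (p : t × (R.ι → ℂ)) :
    R.tor h (R.equiv p) = R.equiv (p.1, fun i => Complex.exp (R.α i h) * p.2 i) := by
  simp only [tor, LinearEquiv.trans_apply, LinearEquiv.symm_apply_apply]
  rfl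

lemma tor_weight {h : t} {z : g} {b : ℂ} (hz : ⁅(h : g), z⁆ = b • z) :
    R.tor h z = Complex.exp b • z := by
  obtain ⟨p, rfl⟩ := R.equiv.surjective z
  rw [R.ad_equiv, ← map_smul] at hz
  have h1 := R.equiv.injective hz
  rw [tor_equiv, ← map_smul]
  congr 1
  have h2 : (0 : t) = b • p.1 := congrArg Prod.fst h1
  have h3 : ∀ i, p.2 i * R.α i h = b * p.2 i := fun i => congrFun (congrArg Prod.snd h1) i
  ext1
  · change p.1 = Complex.exp b • p.1
    rcases smul_eq_zero.1 h2.symm with h4 | h4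
    · simp [h4]
    · simp [h4]
  · funext i
    change _ = Complex.exp b * p.2 i
    by_cases hp : p.2 i = 0
    · simp [hp]
    · have : R.α i h = b := by
        have := h3 i
        rw [mul_comm] at this
        exact mul_right_cancel₀ hp this
      simp only [this]

lemma tor_t (h h' : t) : R.tor h (h' : g) = h' := by
  simpa using R.tor_weight (h := h) (z := h') (b := 0) (by simp [R.abel])

lemma tor_e (h : t) (i : R.ι) : R.tor h (R.e i) = Complex.exp (R.α i h) • R.e i :=
  R.tor_weight (R.lie_e h i)

lemma eig_induct (R : RootData g t) {p : g → Prop} (h : t) (he : ∀ z (b : ℂ), ⁅(h : g), z⁆ = b • z → p z)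
    (hadd : ∀ x y, p x → p y → p (x + y)) (hsmul : ∀ (c : ℂ) x, p x → p (c • x)) (x : g) : p x :=
  R.span_induct (fun h' => he h' 0 (by simp [R.abel])) (fun i => he _ _ (R.lie_e h i)) hadd hsmul x

lemma tor_aut (h : t) : IsLieAut (R.tor h) := by
  intro x y
  refine R.eig_induct h (p := fun x => R.tor h ⁅x, y⁆ = ⁅R.tor h x, R.tor h y⁆) ?_ ?_ ?_ x
  · intro x a hx
    refine R.eig_induct h (p := fun y => R.tor h ⁅x, y⁆ = ⁅R.tor h x, R.tor h y⁆) ?_ ?_ ?_ y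
    · intro y b hy
      have hxy : ⁅(h : g), ⁅x, y⁆⁆ = (a + b) • ⁅x, y⁆ := by
        rw [leibniz_lie, hx, hy]
        simp [add_smul]
      rw [R.tor_weight hx, R.tor_weight hy, R.tor_weight hxy, Complex.exp_add, smul_lie, lie_smul,
        smul_smul]
    · intro y y' h1 h2
      simp [h1, h2]
    · intro c y h1
      simp [h1]
  · intro y y' h1 h2
    simp [h1, h2]
  · intro c y h1
    simp [h1]

lemma tor_add (h h' : t) : R.tor (h + h') = R.tor h * R.tor h' := by
  ext x
  refine R.span_induct (p := fun x => R.tor (h + h') x = (R.tor h * R.tor h') x) ?_ ?_ ?_ ?_ x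
  · intro k
    rw [mul_apply', tor_t, tor_t, tor_t]
  · intro i
    rw [mul_apply', tor_e, tor_e, map_smul, tor_e, smul_smul, map_add, Complex.exp_add, mul_comm]
  · intro x y h1 h2
    rw [map_add, map_add, h1, h2]
  · intro c x h1
    rw [map_smul, map_smul, h1]

lemma tor_zero : R.tor 0 = 1 := by
  ext x
  simpa using R.tor_weight (h := 0) (z := x) (b := 0) (by simp)

lemma tor_neg (h : t) : R.tor (-h) = (R.tor h)⁻¹ := by
  rw [eq_inv_iff_mul_eq_one, ← tor_add, neg_add_cancel, tor_zero]

lemma tor_conj {σ : g ≃ₗ[ℂ] g} (hσ : IsLieAut σ) (h h' : t) (hh : σ (h : g) = h') :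
    σ * R.tor h * σ⁻¹ = R.tor h' := by
  ext x
  refine R.eig_induct h' (p := fun x => (σ * R.tor h * σ⁻¹) x = R.tor h' x) ?_ ?_ ?_ x
  · intro z b hz
    have : ⁅(h : g), σ⁻¹ z⁆ = b • σ⁻¹ z := by
      apply σ.injective
      rw [hσ, hh, apply_inv_self', map_smul, apply_inv_self', hz]
    rw [R.tor_weight hz, mul_apply', mul_apply', R.tor_weight this, map_smul, apply_inv_self']
  · intro x y h1 h2
    rw [map_add, map_add, h1, h2]
  · intro c x h1
    rw [map_smul, map_smul, h1]

lemma exp_comm {x : g} {u τ : g ≃ₗ[ℂ] g} (hu : (u : g →ₗ[ℂ] g) = endExp (ad ℂ g x))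
    (hτ : IsLieAut τ) (hx : τ x = x) (y : g) : τ (u y) = u (τ y) := by
  have h1 : τ.conj (u : g →ₗ[ℂ] g) = u := by
    rw [hu, ← endExp_conj, ← hτ.conj_ad, hx]
  have h2 := LinearMap.congr_fun h1 (τ y)
  rw [LinearEquiv.conj_apply_apply] at h2
  simpa using h2

lemma exists_theta (i : R.ι) : ∃ θ ∈ adjointGroup g, (∀ h : t, θ (h : g) = h - R.α i h • (R.co i : g)) ∧
    ∀ τ : g ≃ₗ[ℂ] g, IsLieAut τ → τ (R.e i) = R.e i → τ (R.f i) = R.f i →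
      ∀ x, τ (θ x) = θ (τ x) := by
  obtain ⟨u, hu, -, hu'⟩ := exists_expAd (R.nil_e i)
  have hn : IsNilpotent (ad ℂ g (-R.f i)) := by
    rw [map_neg]; exact (R.nil_f i).neg
  obtain ⟨v, hv, -, hv'⟩ := exists_expAd hn
  refine ⟨u * v * u, mul_mem (mul_mem hu hv) hu, ?_, ?_⟩
  · have hue : ∀ x, u x = endExp (ad ℂ g (R.e i)) x := fun x => LinearMap.congr_fun hu' x
    have hve : ∀ x, v x = endExp (ad ℂ g (-R.f i)) x := fun x => LinearMap.congr_fun hv' x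
    have eh : ∀ h : t, ⁅R.e i, (h : g)⁆ = -(R.α i h • R.e i) := fun h => by
      rw [← lie_skew, R.lie_e]
    have fh : ∀ h : t, ⁅R.f i, (h : g)⁆ = (R.α i h • R.f i) := fun h => by
      rw [← lie_skew, R.lie_f]; simp
    have fe : ⁅R.f i, R.e i⁆ = -(R.co i : g) := by rw [← lie_skew, R.lie_ef]
    have u_h : ∀ h : t, u (h : g) = h - R.α i h • R.e i := fun h => by
      rw [hue, endExp_apply_three (R.nil_e i)]
      · simp [eh, sub_eq_add_neg]
      · simp [eh]
    have v_h : ∀ h : t, v (h : g) = h - R.α i h • R.f i := fun h => by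
      rw [hve, endExp_apply_three hn]
      · simp [fh, sub_eq_add_neg]
      · simp [fh]
    have u_e : u (R.e i) = R.e i := by
      rw [hue, endExp_apply_three (R.nil_e i)]
      · simp
      · simp
    have v_e : v (R.e i) = R.e i + R.co i - R.f i := by
      rw [hve, endExp_apply_three hn]
      · simp only [ad_apply, neg_lie, fe, lie_neg, neg_neg, fh, R.α_co]
        module
      · simp [fe, fh]
    intro h
    rw [mul_apply', mul_apply', u_h, map_sub, map_smul, v_h, v_e]
    have e1 : (h : g) - R.α i h • R.f i - R.α i h • (R.e i + (R.co i : g) - R.f i) =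
      ((h - R.α i h • R.co i : t) : g) - R.α i h • R.e i := by
      push_cast
      module
    rw [e1, map_sub, u_h, map_smul, u_e]
    simp only [map_sub, map_smul, R.α_co, tcoe_sub, tcoe_smul, smul_eq_mul]
    module
  · intro τ hτ he hf x
    rw [mul_apply', mul_apply', mul_apply', mul_apply', exp_comm hu' hτ he,
      exp_comm hv' hτ (by rw [map_neg, hf]), exp_comm hu' hτ he]

lemma tor_mem (h : t) : R.tor h ∈ adjointGroup g := by
  have key : ∀ i (c : ℂ), R.tor (c • R.co i) ∈ adjointGroup g := by
    intro i c
    obtain ⟨θ, hθ, h1, -⟩ := R.exists_theta i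
    let h : t := (c / 2) • R.co i
    have h2 : R.tor h * θ * (R.tor h)⁻¹ * θ⁻¹ ∈ adjointGroup g :=
      mul_mem (conj_mem (R.tor_aut h) hθ) (inv_mem hθ)
    have h3 : θ * R.tor (-h) * θ⁻¹ = R.tor h := by
      apply R.tor_conj (isLieAut_of_mem hθ)
      rw [h1]
      simp only [h, map_neg, map_smul, R.α_co, tcoe_neg, tcoe_smul, smul_eq_mul]
      module
    have h4 : R.tor (c • R.co i) = R.tor h * θ * (R.tor h)⁻¹ * θ⁻¹ := by
      rw [show R.tor h * θ * (R.tor h)⁻¹ * θ⁻¹ = R.tor h * (θ * (R.tor h)⁻¹ * θ⁻¹) by group,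
        ← tor_neg, h3, ← tor_add]
      congr 1
      simp only [h]
      module
    rwa [h4]
  have hh : h ∈ Submodule.span ℂ (Set.range R.co) := by rw [R.span_co]; trivial
  induction hh using Submodule.span_induction with
  | mem x hx =>
    obtain ⟨i, rfl⟩ := hx
    simpa using key i 1
  | zero => rw [tor_zero]; exact one_mem _
  | add x y _ _ hx hy => rw [tor_add]; exact mul_mem hx hy
  | smul c x hx ih =>
    clear ih
    induction hx using Submodule.span_induction generalizing c with
    | mem x hx =>
      obtain ⟨i, rfl⟩ := hx
      exact key i c
    | zero => rw [smul_zero, tor_zero]; exact one_mem _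
    | add x y _ _ hx hy => rw [smul_add, tor_add]; exact mul_mem (hx _) (hy _)
    | smul d x hx ih => rw [smul_smul]; exact ih _

lemma weight_e {i : R.ι} {z : g} (hz : ∀ h : t, ⁅(h : g), z⁆ = R.α i h • z) : ∃ c : ℂ, z = c • R.e i := by
  obtain ⟨p, rfl⟩ := R.equiv.surjective z
  have h1 : ∀ h : t, ((0 : t), fun j => p.2 j * R.α j h) = R.α i h • p := fun h => by
    apply R.equiv.injective
    rw [← R.ad_equiv, hz, map_smul]
  have h2 : p.1 = 0 := by
    have h2 : (0 : t) = R.α i (R.co i) • p.1 := congrArg Prod.fst (h1 (R.co i))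
    rw [R.α_co] at h2
    simpa using h2.symm
  have h3 : ∀ j, j ≠ i → p.2 j = 0 := by
    intro j hj
    by_contra h0
    apply hj
    apply R.α_inj
    ext h
    have h3 : p.2 j * R.α j h = R.α i h * p.2 j := congrFun (congrArg Prod.snd (h1 h)) j
    rw [mul_comm] at h3
    exact mul_right_cancel₀ h0 h3
  refine ⟨p.2 i, ?_⟩
  rw [← R.equiv_e i, ← map_smul]
  congr 1
  ext1
  · simpa using h2
  · funext j
    by_cases hj : j = i
    · subst hj; simp
    · simp [hj, h3 j hj]

lemma exists_solve (χ : R.ι → ℂ) : ∃ h : t, ∀ i ∈ R.S, R.α i h = χ i := by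
  have hli : LinearIndependent ℂ (fun i : R.S => R.α i) := R.indep
  let b := Basis.span hli
  obtain ⟨L, hL⟩ := LinearMap.exists_extend (b.constr ℂ (fun i : R.S => χ i))
  refine ⟨(Module.evalEquiv ℂ t).symm L, fun i hi => ?_⟩
  rw [Module.apply_evalEquiv_symm_apply]
  have h1 := LinearMap.congr_fun hL (b ⟨i, hi⟩)
  rw [Basis.constr_basis] at h1
  simpa [b, Basis.span_apply] using h1

/-- automorphisms fixing the Cartan subalgebra pointwise are inner -/
lemma mem_of_fix (R : RootData g t) {τ : g ≃ₗ[ℂ] g} (hτ : IsLieAut τ) (hf : ∀ h : t, τ (h : g) = h) :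
    τ ∈ adjointGroup g := by
  have hw : ∀ (τ : g ≃ₗ[ℂ] g), IsLieAut τ → (∀ h : t, τ (h : g) = h) → ∀ i,
      ∃ c : ℂ, τ (R.e i) = c • R.e i := by
    intro τ hτ hf i
    apply R.weight_e
    intro h
    conv_lhs => rw [← hf h]
    rw [← hτ, R.lie_e, map_smul]
  choose χ hχ using hw τ hτ hf
  have hχ0 : ∀ i, χ i ≠ 0 := by
    intro i h0
    have := hχ i
    rw [h0, zero_smul, LinearEquiv.map_eq_zero_iff] at this
    exact R.e_ne i this
  obtain ⟨h, hh⟩ := R.exists_solve (fun i => Complex.log (χ i))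
  set τ' := (R.tor h)⁻¹ * τ with hτ'
  have h1 : IsLieAut τ' := (R.tor_aut h).inv.mul hτ
  have h2 : ∀ k : t, τ' (k : g) = k := by
    intro k
    rw [hτ', mul_apply', hf, ← tor_neg, tor_t]
  have h3 : ∀ i, τ' (R.e i) = R.e i := by
    have hneg : ∀ i k, R.α k = -R.α i → τ' (R.e i) = R.e i → τ' (R.e k) = R.e k := by
      intro i k hik hi
      obtain ⟨c, hc⟩ := hw τ' h1 h2 k
      obtain ⟨z, hz, hz0⟩ := R.lie_ee i k hik
      have hz1 : (z : g) ≠ 0 := by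
        intro h0
        have : z = 0 := by ext; exact h0
        rw [this] at hz0
        simp at hz0
      have h4 := h1 (R.e i) (R.e k)
      rw [hi, hc, lie_smul, hz, h2] at h4
      have : c = 1 := by
        have h5 : (c - 1) • (z : g) = 0 := by rw [sub_smul, ← h4, one_smul, sub_self]
        rcases smul_eq_zero.1 h5 with h | h
        · exact sub_eq_zero.1 h
        · exact absurd h hz1
      rw [hc, this, one_smul]
    have hS : ∀ i ∈ R.S, τ' (R.e i) = R.e i := by
      intro i hi
      rw [hτ', mul_apply', hχ, map_smul, ← tor_neg, tor_e, map_neg, hh i hi, Complex.exp_neg,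
        Complex.exp_log (hχ0 i), smul_smul, mul_inv_cancel₀ (hχ0 i), one_smul]
    apply R.induct _ hS hneg
    intro i j k hk hi hj
    have hfj : τ' (R.f j) = R.f j := by
      obtain ⟨m, hm⟩ := R.exists_neg j
      obtain ⟨c, hc⟩ := R.weight_e (i := m) (z := R.f j) (fun h => by rw [R.lie_f, hm]; simp)
      rw [hc, map_smul, hneg j m hm (hS j hj)]
    obtain ⟨θ, hθ, hθ1, hθ2⟩ := R.exists_theta j
    have hcomm := hθ2 τ' h1 (hS j hj) hfj (R.e i)
    rw [hi] at hcomm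
    obtain ⟨c, hc⟩ := R.weight_e (i := k) (z := θ (R.e i)) (fun h => by
      have e1 : (h : g) = θ ((h - R.α j h • R.co j : t) : g) := by
        rw [hθ1]
        simp only [map_sub, map_smul, R.α_co, tcoe_sub, tcoe_smul, smul_eq_mul]
        module
      conv_lhs => rw [e1]
      rw [← isLieAut_of_mem hθ, R.lie_e, map_smul, hk]
      congr 1
      simp
      ring)
    rw [hc, map_smul] at hcomm
    have hc0 : c ≠ 0 := by
      rintro rfl
      rw [zero_smul, LinearEquiv.map_eq_zero_iff] at hc
      exact R.e_ne i hc
    exact smul_right_injective g hc0 hcomm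
  have h4 : τ' = 1 := by
    ext x
    refine R.span_induct (p := fun x => τ' x = x) h2 h3 ?_ ?_ x
    · intro x y h1 h2
      rw [map_add, h1, h2]
    · intro c x h1
      rw [map_smul, h1]
  have h5 : τ = R.tor h := by
    rw [hτ', inv_mul_eq_one] at h4
    exact h4.symm
  rw [h5]
  exact R.tor_mem h

end RootData
end PartG
end

noncomputable section
set_option linter.unusedSectionVars false

section PartDF
open LieAlgebra LieSubalgebra Module
variable {g : Type} [LieRing g] [LieAlgebra ℂ g] [FiniteDimensional ℂ g]

lemma neg_mem_prime [LieAlgebra.IsSimple ℂ g] (t : LieSubalgebra ℂ g) [t.IsCartanSubalgebra]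
    {ψ n : g ≃ₗ[ℂ] g} (hψ : IsLieAut ψ)
    (hψt : ∀ x ∈ t, ψ x = -x) (hn : ∀ x, n x = -ψ x) : n ∈ primeGroup (adjointGroup g) := by
  intro f hf hinv v
  have hp : IsPolyFun (fun x => f (n x) - f x) := (hf.comp_linear n.toLinearMap).sub hf
  obtain ⟨y, hy⟩ := exists_disc (g := g)
  refine sub_eq_zero.1 (hp.eq_zero_of_mul disc_poly ?_ hy v)
  intro x hx
  obtain ⟨u, hu, hux⟩ := exists_conj_mem t hx
  have h1 : n x = (ψ * u⁻¹ * ψ⁻¹) (u x) := by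
    have h2 : ψ⁻¹ (u x) = -u x := by
      apply ψ.injective
      rw [apply_inv_self', map_neg, hψt _ hux, neg_neg]
    rw [hn, mul_apply', mul_apply', h2, map_neg, inv_apply_self', map_neg]
  rw [h1, hinv _ (conj_mem hψ (inv_mem hu)), hinv u hu, sub_self]

/-- The Weyl group, as the set of restrictions of elements of the adjoint group. -/
def weylSet (t : LieSubalgebra ℂ g) : Set (t →ₗ[ℂ] t) :=
  {A | ∃ u ∈ adjointGroup g, ∀ h : t, u (h : g) = A h}

variable {t : LieSubalgebra ℂ g}

lemma weyl_one : (1 : Module.End ℂ t) ∈ weylSet t := ⟨1, one_mem _, fun _ => rfl⟩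

lemma weyl_inj {A : t →ₗ[ℂ] t} (hA : A ∈ weylSet t) : Function.Injective A := by
  obtain ⟨u, hu, h⟩ := hA
  intro x y hxy
  have : u (x : g) = u (y : g) := by rw [h, h, hxy]
  exact Subtype.ext (u.injective this)

lemma weyl_comp {A B : t →ₗ[ℂ] t} (hA : A ∈ weylSet t) (hB : B ∈ weylSet t) :
    A ∘ₗ B ∈ weylSet t := by
  obtain ⟨u, hu, h⟩ := hA
  obtain ⟨v, hv, h'⟩ := hB
  exact ⟨u * v, mul_mem hu hv, fun x => by rw [mul_apply', h', h]; rfl⟩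

lemma RootData.weight_any (R : RootData g t) {β : t →ₗ[ℂ] ℂ} {z : g} (hz : z ≠ 0) (hβ : β ≠ 0)
    (h : ∀ h : t, ⁅(h : g), z⁆ = β h • z) : ∃ j, β = R.α j := by
  obtain ⟨p, rfl⟩ := R.equiv.surjective z
  have h1 : ∀ h : t, ((0 : t), fun j => p.2 j * R.α j h) = β h • p := fun k => by
    apply R.equiv.injective
    rw [← R.ad_equiv, h, map_smul]
  by_contra! hne
  apply hz
  have h2 : p.1 = 0 := by
    obtain ⟨k, hk⟩ : ∃ k, β k ≠ 0 := by
      by_contra! h0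
      exact hβ (LinearMap.ext h0)
    have h2 : (0 : t) = β k • p.1 := congrArg Prod.fst (h1 k)
    simpa [hk] using h2.symm
  have h3 : p.2 = 0 := by
    funext j
    by_contra h0
    apply hne j
    ext k
    have h3 : p.2 j * R.α j k = β k * p.2 j := congrFun (congrArg Prod.snd (h1 k)) j
    rw [mul_comm] at h3
    exact (mul_right_cancel₀ h0 h3).symm
  have : p = 0 := Prod.ext h2 h3
  rw [this, map_zero]

lemma RootData.weyl_finite (R : RootData g t) : (weylSet t).Finite := by
  have key : ∀ A : weylSet t, ∃ p : R.ι → R.ι, ∀ i, R.α i ∘ₗ A.1 = R.α (p i) := by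
    rintro ⟨A, hA⟩
    have : ∀ i, ∃ j, R.α i ∘ₗ A = R.α j := by
      intro i
      have hinj := weyl_inj hA
      obtain ⟨u, hu, h⟩ := hA
      refine R.weight_any (z := u⁻¹ (R.e i)) ?_ ?_ ?_
      · rw [ne_eq, LinearEquiv.map_eq_zero_iff]; exact R.e_ne i
      · intro h0
        have hsurj : Function.Surjective A := LinearMap.injective_iff_surjective.1 hinj
        apply R.α_ne i
        ext x
        obtain ⟨y, rfl⟩ := hsurj x
        exact LinearMap.congr_fun h0 y
      · intro k
        apply u.injective
        rw [isLieAut_of_mem hu, h, apply_inv_self', map_smul, apply_inv_self', R.lie_e]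
        rfl
    choose p hp using this
    exact ⟨p, hp⟩
  choose p hp using key
  have hinj : Function.Injective p := by
    intro A B hAB
    ext x
    have h1 : A.1 x = B.1 x := by
      rw [← sub_eq_zero, ← Module.forall_dual_apply_eq_zero_iff ℂ]
      intro φ
      have hφ : φ ∈ Submodule.span ℂ (Set.range R.α) := by rw [R.span_α]; trivial
      induction hφ using Submodule.span_induction with
      | mem φ hφ =>
        obtain ⟨i, rfl⟩ := hφ
        have h1 := LinearMap.congr_fun (hp A i) x
        have h2 := LinearMap.congr_fun (hp B i) x
        rw [map_sub, sub_eq_zero]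
        rw [hAB] at h1
        exact h1.trans h2.symm
      | zero => rfl
      | add φ φ' _ _ h1 h2 => rw [LinearMap.add_apply, h1, h2, add_zero]
      | smul c φ _ h1 => rw [LinearMap.smul_apply, h1, smul_zero]
    rw [h1]
  exact Set.finite_coe_iff.1 (Finite.of_injective p hinj)

end PartDF
end

noncomputable section
set_option linter.unusedSectionVars false

section PartF
open LieAlgebra LieSubalgebra Module
variable {g : Type} [LieRing g] [LieAlgebra ℂ g] [FiniteDimensional ℂ g]
variable {t : LieSubalgebra ℂ g}

/-- an element of the group moving one regular element of `t` into `t` normalizes `t`. -/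
lemma RootData.normalizes (R : RootData g t) {a : g ≃ₗ[ℂ] g} (ha : IsLieAut a) {h h' : t}
    (hd : disc (h : g) ≠ 0) (hh : a (h : g) = h') : ∃ A : t →ₗ[ℂ] t, ∀ k : t, a (k : g) = A k := by
  have hd' : disc (h' : g) ≠ 0 := by rw [← hh, disc_inv ha]; exact hd
  have h1 : ∀ z, z ∈ t → a z ∈ t := by
    intro z hz
    have h2 := (engel_aut ha (h : g) z).1 (by rw [R.engel_of_disc hd]; exact hz)
    rwa [hh, R.engel_of_disc hd'] at h2
  refine ⟨{ toFun := fun k => ⟨a k, h1 _ k.2⟩, map_add' := ?_, map_smul' := ?_ }, fun k => rfl⟩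
  · intro x y
    ext
    simp
  · intro c x
    ext
    simp

variable [LieAlgebra.IsSimple ℂ g]

/-- extension of Weyl invariant functions: the version we need. -/
lemma RootData.extend [t.IsCartanSubalgebra] (R : RootData g t) (W : Finset (t →ₗ[ℂ] t))
    (hW : ∀ A, A ∈ W ↔ A ∈ weylSet t) (ℓ : Dual ℂ t) (b : ℂ) :
    ∃ F : g → ℂ, IsPolyFun F ∧ (∀ u ∈ adjointGroup g, ∀ x, F (u x) = F x) ∧
      ∀ h : t, disc (h : g) ≠ 0 → F h = disc (h : g) ^ 2 * ∏ w ∈ W, (ℓ (w h) - b) := by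
  classical
  let f : t → ℂ := fun h => ∏ w ∈ W, (ℓ (w h) - b)
  have hfW : ∀ A ∈ weylSet t, ∀ h, f (A h) = f h := by
    intro A hA h
    have hinj : Set.InjOn (fun w : t →ₗ[ℂ] t => w ∘ₗ A) W := by
      intro w _ w' _ hww
      have hsurj : Function.Surjective A := LinearMap.injective_iff_surjective.1 (weyl_inj hA)
      ext1 x
      obtain ⟨y, rfl⟩ := hsurj x
      exact LinearMap.congr_fun hww y
    have himg : W.image (fun w : t →ₗ[ℂ] t => w ∘ₗ A) = W := by
      apply Finset.eq_of_subset_of_card_le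
      · intro w hw
        obtain ⟨w', hw', rfl⟩ := Finset.mem_image.1 hw
        rw [hW] at hw' ⊢
        exact weyl_comp hw' hA
      · rw [Finset.card_image_of_injOn hinj]
    change ∏ w ∈ W, (ℓ (w (A h)) - b) = ∏ w ∈ W, (ℓ (w h) - b)
    conv_rhs => rw [← himg, Finset.prod_image hinj]
    rfl
  have hex : ∀ x : g, ∃ u ∈ adjointGroup g, disc x ≠ 0 → u x ∈ t := by
    intro x
    by_cases hx : disc x = 0
    · exact ⟨1, one_mem _, fun h => absurd hx h⟩
    · obtain ⟨u, hu, h⟩ := exists_conj_mem t hx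
      exact ⟨u, hu, fun _ => h⟩
  choose U hU hUt using hex
  let F : g → ℂ := fun x => disc x ^ 2 * f (R.proj (U x x))
  have hF : ∀ (x : g) (u : g ≃ₗ[ℂ] g) (h : t), u ∈ adjointGroup g → disc x ≠ 0 → u x = h →
      F x = disc x ^ 2 * f h := by
    intro x u h hu hx hux
    change disc x ^ 2 * f (R.proj (U x x)) = _
    congr 1
    let h' : t := ⟨U x x, hUt x hx⟩
    have e1 : R.proj (U x x) = h' := R.proj_t h'
    have hd : disc (h : g) ≠ 0 := by rw [← hux, disc_inv (isLieAut_of_mem hu)]; exact hx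
    have hm : U x * u⁻¹ ∈ adjointGroup g := mul_mem (hU x) (inv_mem hu)
    have e2 : (U x * u⁻¹) (h : g) = h' := by
      rw [← hux, mul_apply', inv_apply_self']
    obtain ⟨A, hA⟩ := R.normalizes (isLieAut_of_mem hm) hd e2
    have e3 : A h = h' := Subtype.ext (by rw [← hA, e2])
    rw [e1, ← e3]
    exact hfW A ⟨_, hm, hA⟩ h
  have hF0 : ∀ x, disc x = 0 → F x = 0 := by
    intro x hx
    simp [F, hx]
  have hFinv : ∀ u ∈ adjointGroup g, ∀ x, F (u x) = F x := by
    intro u hu x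
    have hd : disc (u x) = disc x := disc_inv (isLieAut_of_mem hu) x
    by_cases hx : disc x = 0
    · rw [hF0 x hx, hF0 _ (hd.trans hx)]
    · rw [hF x (U x) ⟨_, hUt x hx⟩ (hU x) hx rfl,
        hF (u x) (U x * u⁻¹) ⟨_, hUt x hx⟩ (mul_mem (hU x) (inv_mem hu)) (by rwa [hd])
        (by rw [mul_apply', inv_apply_self']), hd]
  refine ⟨F, ?_, hFinv, fun h hd => hF h 1 h (one_mem _) hd rfl⟩
  obtain ⟨C, hC, hCb⟩ := eigenvalue_bound (LieAlgebra.ad ℂ g : g →ₗ[ℂ] Module.End ℂ g)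
  -- the bound for a dual vector
  have hdual : ∀ φ : Dual ℂ t, ∃ K : ℝ, 0 ≤ K ∧ ∀ (x : g) (h : t) (u : g ≃ₗ[ℂ] g),
      u ∈ adjointGroup g → u x = h → ‖φ h‖ ≤ K * ‖(Module.finBasis ℂ g).equivFun x‖ := by
    intro φ
    have hφ : φ ∈ Submodule.span ℂ (Set.range R.α) := by rw [R.span_α]; trivial
    induction hφ using Submodule.span_induction with
    | mem φ hφ =>
      obtain ⟨i, rfl⟩ := hφ
      refine ⟨C, hC, fun x h u hu hux => hCb x (u⁻¹ (R.e i)) _ ?_ ?_⟩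
      · rw [ne_eq, LinearEquiv.map_eq_zero_iff]; exact R.e_ne i
      · apply u.injective
        change u ⁅x, u⁻¹ (R.e i)⁆ = _
        rw [isLieAut_of_mem hu, hux, apply_inv_self', map_smul, apply_inv_self', R.lie_e]
    | zero => exact ⟨0, le_rfl, fun x h u _ _ => by simp⟩
    | add φ φ' _ _ h1 h2 =>
      obtain ⟨K, hK, h1⟩ := h1
      obtain ⟨K', hK', h2⟩ := h2
      refine ⟨K + K', add_nonneg hK hK', fun x h u hu hux => ?_⟩
      rw [add_mul]
      exact (norm_add_le _ _).trans (add_le_add (h1 x h u hu hux) (h2 x h u hu hux))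
    | smul c φ _ h1 =>
      obtain ⟨K, hK, h1⟩ := h1
      refine ⟨‖c‖ * K, by positivity, fun x h u hu hux => ?_⟩
      rw [LinearMap.smul_apply, norm_smul, mul_assoc]
      exact mul_le_mul_of_nonneg_left (h1 x h u hu hux) (norm_nonneg _)
  obtain ⟨K, hK, hKb⟩ := hdual ℓ
  refine slice_poly (P := disc) (C := (K + ‖b‖) ^ W.card) (N := W.card) disc_poly (by positivity) ?_ ?_
  · intro x
    by_cases hx : disc x = 0
    · rw [hF0 x hx, hx]; simp
    rw [hF x (U x) ⟨_, hUt x hx⟩ (hU x) hx rfl, norm_mul, norm_pow]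
    rw [mul_right_comm, mul_comm]
    refine mul_le_mul_of_nonneg_right ?_ (by positivity)
    change ‖∏ w ∈ W, (ℓ (w _) - b)‖ ≤ _
    rw [norm_prod, ← mul_pow, ← Finset.prod_const]
    refine Finset.prod_le_prod (fun _ _ => norm_nonneg _) fun w hw => ?_
    obtain ⟨v, hv, hvw⟩ := (hW w).1 hw
    have h1 := hKb x (w ⟨U x x, hUt x hx⟩) (v * U x) (mul_mem hv (hU x))
      (by rw [← hvw, mul_apply'])
    have h2 := norm_nonneg ((Module.finBasis ℂ g).equivFun x)
    have h3 := norm_nonneg b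
    calc _ ≤ ‖ℓ (w ⟨U x x, hUt x hx⟩)‖ + ‖b‖ := norm_sub_le _ _
      _ ≤ _ := by nlinarith
  · intro x hx
    refine ⟨(U x)⁻¹, fun y => hFinv _ (inv_mem (hU x)) y, U x x, (inv_apply_self' _ _).symm, ?_, ?_⟩
    · rw [disc_inv (isLieAut_of_mem (hU x))]; exact hx
    have hd : disc (U x x) ≠ 0 := by rw [disc_inv (isLieAut_of_mem (hU x))]; exact hx
    refine ⟨_, t.toSubmodule, R.A, fun y => disc y ^ 2 * f (R.proj y),
      R.isSlice (h := ⟨U x x, hUt x hx⟩) (R.disc_iff.1 hd), ?_, ?_⟩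
    · refine (disc_poly.pow 2).mul (IsPolyFun.prod fun w _ => ?_)
      exact (IsPolyFun.linear (ℓ ∘ₗ w ∘ₗ R.proj)).sub (IsPolyFun.const b)
    · intro y hy hdy c
      obtain ⟨u, hu, hu'⟩ := R.expProd_mem c
      rw [← hu']
      change F (u y) = _
      rw [hFinv u hu, hF y 1 ⟨y, hy⟩ (one_mem _) hdy rfl]
      have := R.proj_t ⟨y, hy⟩
      simp only at this
      simp only [this]

lemma mem_of_aut_prime (t : LieSubalgebra ℂ g) [t.IsCartanSubalgebra] {σ : g ≃ₗ[ℂ] g}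
    (hσ : IsLieAut σ) (hp : σ ∈ primeGroup (adjointGroup g)) : σ ∈ adjointGroup g := by
  classical
  obtain ⟨R⟩ := exists_rootData g t
  have hle : adjointGroup g ≤ primeGroup (adjointGroup g) := fun u hu f _ hinv v => hinv u hu v
  obtain ⟨h1, hh1⟩ := R.exists_generic
  have hd1 := R.disc_iff.2 hh1
  obtain ⟨u, hu, hut⟩ := exists_conj_mem t (x := σ h1) (by rw [disc_inv hσ]; exact hd1)
  set τ := u * σ with hτdef
  have hτ : IsLieAut τ := (isLieAut_of_mem hu).mul hσ
  have hτp : τ ∈ primeGroup (adjointGroup g) := mul_mem (hle hu) hp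
  obtain ⟨S, hS⟩ := R.normalizes hτ (h' := ⟨_, hut⟩) hd1 rfl
  suffices hSW : S ∈ weylSet t by
    obtain ⟨w, hw, hwS⟩ := hSW
    have h2 : w⁻¹ * τ ∈ adjointGroup g := by
      apply R.mem_of_fix ((isLieAut_of_mem (inv_mem hw)).mul hτ)
      intro h
      rw [mul_apply', hS, ← hwS, inv_apply_self']
    have h3 : σ = u⁻¹ * (w * (w⁻¹ * τ)) := by rw [hτdef]; group
    rw [h3]
    exact mul_mem (inv_mem hu) (mul_mem hw h2)
  by_contra hSW
  let W := R.weyl_finite.toFinset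
  have hW : ∀ A, A ∈ W ↔ A ∈ weylSet t := fun A => Set.Finite.mem_toFinset _
  have hne : ∀ w : W, ∃ φ : Dual ℂ t, ∃ x, φ ((S - w.1) x) ≠ 0 := by
    rintro ⟨w, hw⟩
    by_contra! h0
    apply hSW
    have : S = w := by
      rw [← sub_eq_zero]
      ext1 x
      exact (Module.forall_dual_apply_eq_zero_iff ℂ _).1 (fun φ => h0 φ x)
    rw [this]
    exact (hW w).1 hw
  choose φ hφ using hne
  obtain ⟨h0, hh0⟩ := Module.Dual.exists_forall_ne_zero_of_forall_exists (K := ℂ) (M := t)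
    (f := Sum.elim R.α (fun w : W => φ w ∘ₗ (S - w.1))) (by
      rintro (i | w)
      · exact ⟨R.co i, by simp [R.α_co]⟩
      · exact hφ w)
  have hd0 := R.disc_iff.2 (fun i => hh0 (Sum.inl i))
  obtain ⟨ℓ, hℓ⟩ := Module.exists_dual_forall_apply_ne_zero (K := ℂ) (M := t)
    (fun w : W => w.1 h0 - S h0) (by
      intro w h2
      apply hh0 (Sum.inr w)
      change φ w (S h0 - w.1 h0) = 0
      rw [← neg_sub, h2]
      simp)
  obtain ⟨F, hF, hFinv, hFt⟩ := R.extend W hW ℓ (ℓ (S h0))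
  have h3 := hτp F hF hFinv h0
  have hdS : disc ((S h0 : t) : g) ≠ 0 := by rw [← hS, disc_inv hτ]; exact hd0
  rw [hS, hFt _ hdS, hFt _ hd0] at h3
  have h4 : ∏ w ∈ W, (ℓ (w (S h0)) - ℓ (S h0)) = 0 := by
    apply Finset.prod_eq_zero (i := (1 : Module.End ℂ t)) ((hW _).2 weyl_one)
    simp
  rw [h4, mul_zero] at h3
  symm at h3
  rw [mul_eq_zero, Finset.prod_eq_zero_iff] at h3
  rcases h3 with h3 | ⟨w, hw, h3⟩
  · exact hd0 (pow_eq_zero_iff (two_ne_zero) |>.1 h3)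
  · apply hℓ ⟨w, hw⟩
    rw [map_sub]
    exact h3

end PartF
end

noncomputable section
set_option linter.unusedSectionVars false

section PartE
open LieAlgebra LieSubalgebra Module

section tr
variable {V : Type*} [AddCommGroup V] [Module ℂ V] [FiniteDimensional ℂ V]

/-- formal derivative of `tr (C A^k)` in direction `B` -/
def trD (A B : Module.End ℂ V) : ℕ → Module.End ℂ V → ℂ
  | 0, _ => 0
  | k + 1, C => trD A B k (C * A) + LinearMap.trace ℂ V (C * B * A ^ k)

lemma trD_hasDerivAt (A B : Module.End ℂ V) (k : ℕ) (C : Module.End ℂ V) :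
    HasDerivAt (fun s : ℂ => LinearMap.trace ℂ V (C * (A + s • B) ^ k)) (trD A B k C) 0 := by
  induction k generalizing C with
  | zero => simpa [trD] using hasDerivAt_const (0 : ℂ) (LinearMap.trace ℂ V C)
  | succ k ih =>
    have h1 : (fun s : ℂ => LinearMap.trace ℂ V (C * (A + s • B) ^ (k + 1))) =
        fun s => LinearMap.trace ℂ V (C * A * (A + s • B) ^ k) +
          s * LinearMap.trace ℂ V (C * B * (A + s • B) ^ k) := by
      funext s
      rw [pow_succ', ← mul_assoc, mul_add, add_mul, map_add, mul_smul_comm, smul_mul_assoc, map_smul,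
        smul_eq_mul]
    rw [h1]
    have h2 := (ih (C * A)).add ((hasDerivAt_id (0 : ℂ)).mul (ih (C * B)))
    refine HasDerivAt.congr_deriv h2 ?_
    simp [trD]

lemma trD_pow (A B : Module.End ℂ V) (k j : ℕ) :
    trD A B (k + 1) (A ^ j) = (k + 1 : ℂ) * LinearMap.trace ℂ V (A ^ (j + k) * B) := by
  induction k generalizing j with
  | zero => simp [trD]
  | succ k ih =>
    have h1 : LinearMap.trace ℂ V (A ^ j * B * A ^ (k + 1)) =
        LinearMap.trace ℂ V (A ^ (j + (k + 1)) * B) := by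
      rw [LinearMap.trace_mul_comm, ← mul_assoc, ← pow_add, add_comm]
    rw [trD, ← pow_succ, ih, h1, show j + 1 + k = j + (k + 1) by ring]
    push_cast
    ring

lemma trD_one (A B : Module.End ℂ V) (k : ℕ) :
    trD A B (k + 1) 1 = (k + 1 : ℂ) * LinearMap.trace ℂ V (A ^ k * B) := by
  simpa using trD_pow A B k 0

lemma trD_comm (A Y : Module.End ℂ V) (k : ℕ) (C : Module.End ℂ V) :
    trD A (Y * A - A * Y) k C = LinearMap.trace ℂ V (C * (Y * A ^ k - A ^ k * Y)) := by
  induction k generalizing C with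
  | zero => simp [trD]
  | succ k ih =>
    rw [trD, ih, ← map_add]
    congr 1
    rw [pow_succ']
    noncomm_ring

lemma poly_trace (L : V →ₗ[ℂ] Module.End ℂ V) (k : ℕ) (ℓ : Module.End ℂ V →ₗ[ℂ] ℂ) :
    IsPolyFun (fun x => ℓ (L x ^ k)) := by
  induction k generalizing ℓ with
  | zero => simpa using IsPolyFun.const _
  | succ k ih =>
    let b := Module.finBasis ℂ V
    have h1 : (fun x => ℓ (L x ^ (k + 1))) =
        fun x => ∑ j, b.coord j x * (ℓ ∘ₗ LinearMap.mulLeft ℂ (L (b j))) (L x ^ k) := by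
      funext x
      have hx : L x = ∑ j, b.coord j x • L (b j) := by
        conv_lhs => rw [← b.sum_repr x]
        rw [map_sum]
        simp only [map_smul]
        rfl
      rw [pow_succ']
      conv_lhs => enter [2, 1]; rw [hx]
      rw [Finset.sum_mul, map_sum]
      simp
    rw [h1]
    exact IsPolyFun.sum fun j _ => (IsPolyFun.linear _).mul (ih _)

end tr

variable {g : Type} [LieRing g] [LieAlgebra ℂ g] [FiniteDimensional ℂ g]

/-- `tr ((ad x)^k ad y)` -/
def trk (k : ℕ) (x y : g) : ℂ := LinearMap.trace ℂ g ((ad ℂ g x) ^ k * ad ℂ g y)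

lemma trk_add (k : ℕ) (x y z : g) : trk k x (y + z) = trk k x y + trk k x z := by
  simp [trk, mul_add]

lemma trk_smul (k : ℕ) (x y : g) (c : ℂ) : trk k x (c • y) = c * trk k x y := by
  simp [trk]

lemma trk_one (x y : g) : trk 1 x y = killingForm ℂ g x y := by
  simp [trk, killingForm_apply_apply]; rfl

lemma conj_pow' (a : g ≃ₗ[ℂ] g) (A : Module.End ℂ g) (k : ℕ) :
    a.conj A ^ k = a.conj (A ^ k) := (map_pow (LinearEquiv.conjAlgEquiv ℂ a) A k).symm

lemma trk_prime {φ : g ≃ₗ[ℂ] g} (hφ : φ ∈ primeGroup (adjointGroup g)) (k : ℕ) (x y : g) :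
    trk k (φ x) (φ y) = trk k x y := by
  have h1 : ∀ z, LinearMap.trace ℂ g ((ad ℂ g (φ z)) ^ (k + 1)) =
      LinearMap.trace ℂ g ((ad ℂ g z) ^ (k + 1)) := by
    refine hφ (fun z => LinearMap.trace ℂ g ((ad ℂ g z) ^ (k + 1)))
      (poly_trace (ad ℂ g : g →ₗ[ℂ] Module.End ℂ g) (k + 1) (LinearMap.trace ℂ g)) ?_
    intro u hu v
    rw [(isLieAut_of_mem hu).conj_ad, conj_pow', LinearMap.trace_conj']
  have h2 := trD_hasDerivAt (ad ℂ g (φ x)) (ad ℂ g (φ y)) (k + 1) 1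
  have h3 := trD_hasDerivAt (ad ℂ g x) (ad ℂ g y) (k + 1) 1
  have h4 : (fun s : ℂ => LinearMap.trace ℂ g (1 * (ad ℂ g (φ x) + s • ad ℂ g (φ y)) ^ (k + 1))) =
      fun s : ℂ => LinearMap.trace ℂ g (1 * (ad ℂ g x + s • ad ℂ g y) ^ (k + 1)) := by
    funext s
    rw [one_mul, one_mul, ← map_smul, ← map_smul, ← map_add, ← map_add, ← map_smul, ← map_add, h1]
  rw [h4] at h2
  have h5 := h2.unique h3
  rw [trD_one, trD_one] at h5
  have : (k + 1 : ℂ) ≠ 0 := by exact_mod_cast Nat.succ_ne_zero k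
  exact mul_left_cancel₀ this h5

/-- the tangent Lie algebra of the group preserving the invariants -/
def MM (g : Type) [LieRing g] [LieAlgebra ℂ g] [FiniteDimensional ℂ g] : Set (Module.End ℂ g) :=
  {D | ∀ x k, trk k x (D x) = 0}

lemma ad_lie' (x y : g) : ad ℂ g ⁅x, y⁆ = ad ℂ g x * ad ℂ g y - ad ℂ g y * ad ℂ g x := by
  ext z
  simp

lemma ad_mem_MM (y : g) : ad ℂ g y ∈ MM g := by
  intro x k
  rw [trk, ad_apply, ad_lie', mul_sub, map_sub, ← mul_assoc, LinearMap.trace_mul_comm _ (_ * _),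
    ← mul_assoc, ← mul_assoc, ← pow_succ', pow_succ, sub_self]

lemma conj_mem_MM {φ : g ≃ₗ[ℂ] g} (hφ : φ ∈ primeGroup (adjointGroup g)) {D : Module.End ℂ g}
    (hD : D ∈ MM g) : φ.conj D ∈ MM g := by
  intro x k
  have h1 := trk_prime hφ k (φ.symm x) (D (φ.symm x))
  rw [hD, φ.apply_symm_apply] at h1
  exact h1

/-- `[ad w, D]` -/
def br (w : g) (D : Module.End ℂ g) : Module.End ℂ g := ad ℂ g w * D - D * ad ℂ g w

lemma br_apply (w : g) (D : Module.End ℂ g) (x : g) : br w D x = ⁅w, D x⁆ - D ⁅w, x⁆ := by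
  simp [br]

lemma br_mem_MM (w : g) {D : Module.End ℂ g} (hD : D ∈ MM g) : br w D ∈ MM g := by
  intro x k
  have h0 : ∀ s : ℂ, trk k (x + s • ⁅w, x⁆) (D (x + s • ⁅w, x⁆)) = 0 := fun s => hD _ k
  have h1 := (trD_hasDerivAt (ad ℂ g x) (ad ℂ g ⁅w, x⁆) k (ad ℂ g (D x))).add
    ((hasDerivAt_id (0 : ℂ)).mul (trD_hasDerivAt (ad ℂ g x) (ad ℂ g ⁅w, x⁆) k (ad ℂ g (D ⁅w, x⁆))))
  have h2 : HasDerivAt (fun _ : ℂ => (0 : ℂ)) 0 0 := hasDerivAt_const _ _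
  have h3 := h1.unique (h2.congr_of_eventuallyEq (Filter.Eventually.of_forall fun s => ?_))
  · rw [ad_lie' w x, trD_comm] at h3
    simp only [id, zero_smul, add_zero, zero_mul, one_mul] at h3
    rw [br_apply, sub_eq_add_neg, ← neg_one_smul ℂ, trk_add, trk_smul]
    have h4 : LinearMap.trace ℂ g (ad ℂ g (D x) * (ad ℂ g w * ad ℂ g x ^ k - ad ℂ g x ^ k * ad ℂ g w))
        = - trk k x ⁅w, D x⁆ := by
      rw [trk, ad_lie', mul_sub, mul_sub, map_sub, map_sub,
        LinearMap.trace_mul_comm _ _ (_ * ad ℂ g w), LinearMap.trace_mul_comm _ (ad ℂ g (D x)),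
        mul_assoc, LinearMap.trace_mul_comm _ (ad ℂ g w), mul_assoc, mul_assoc]
      ring
    have h5 : LinearMap.trace ℂ g (ad ℂ g (D ⁅w, x⁆) * ad ℂ g x ^ k) = trk k x (D ⁅w, x⁆) := by
      rw [trk, LinearMap.trace_mul_comm]
    rw [h4, h5] at h3
    linear_combination -h3
  · have h6 := h0 s
    rw [map_add, trk_add, map_smul, trk_smul, trk, trk, LinearMap.trace_mul_comm,
      LinearMap.trace_mul_comm _ _ (ad ℂ g (D ⁅w, x⁆)), map_add, map_smul] at h6
    exact h6

namespace RootData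
variable {t : LieSubalgebra ℂ g} (R : RootData g t)

lemma trk_e (h : t) (k : ℕ) (i : R.ι) : trk k (h : g) (R.e i) = 0 := by
  have h1 : trk k (h : g) ⁅(R.co i : g), R.e i⁆ = 0 := by
    have hc : Commute (ad ℂ g (h : g)) (ad ℂ g (R.co i : g)) := by
      have := ad_lie' (h : g) (R.co i : g)
      rw [R.abel, map_zero] at this
      exact (sub_eq_zero.1 this.symm)
    rw [trk, ad_lie', mul_sub, map_sub, ← mul_assoc, (hc.pow_left k).eq, mul_assoc,
      LinearMap.trace_mul_comm, mul_assoc, sub_self]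
  rw [R.lie_e, R.α_co, trk_smul] at h1
  simpa using h1

lemma trk_t (h h' : t) (k : ℕ) : trk k (h : g) (h' : g) = ∑ i, R.α i h ^ k * R.α i h' := by
  have h1 : ∀ p, (ad ℂ g (h : g) ^ k * ad ℂ g (h' : g)) (R.equiv p) =
      R.equiv (0, fun i => R.α i h ^ k * R.α i h' * p.2 i) := by
    intro p
    rw [Module.End.mul_apply, ad_apply, R.ad_equiv]
    cases k with
    | zero => simp [mul_comm]
    | succ k =>
      rw [R.ad_pow_equiv]
      congr 2
      funext i
      ring
  let Dg : (R.ι → ℂ) →ₗ[ℂ] (R.ι → ℂ) := Matrix.toLin' (Matrix.diagonal fun i => R.α i h ^ k * R.α i h')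
  have h2 : ad ℂ g (h : g) ^ k * ad ℂ g (h' : g) =
      R.equiv.conj (LinearMap.prodMap (0 : t →ₗ[ℂ] t) Dg) := by
    ext x
    obtain ⟨p, rfl⟩ := R.equiv.surjective x
    rw [h1, LinearEquiv.conj_apply_apply, LinearEquiv.symm_apply_apply]
    congr 1
    ext1
    · simp
    · funext i
      simp [Dg, Matrix.mulVec_diagonal]
  rw [trk, h2, LinearMap.trace_conj', LinearMap.trace_prodMap']
  simp [Dg, Matrix.trace]

end RootData
end PartE
end

noncomputable section
set_option linter.unusedSectionVars false

section PartE2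
open LieAlgebra LieSubalgebra Module
variable {g : Type} [LieRing g] [LieAlgebra ℂ g] [FiniteDimensional ℂ g]

lemma kap_comm (x y : g) : killingForm ℂ g x y = killingForm ℂ g y x :=
  LieModule.traceForm_comm ℂ g g x y

lemma kap_inv (x y z : g) : killingForm ℂ g ⁅x, y⁆ z = killingForm ℂ g x ⁅y, z⁆ :=
  LieModule.traceForm_apply_lie_apply ℂ g g x y z

lemma kap_self {D : Module.End ℂ g} (hD : D ∈ MM g) (x : g) : killingForm ℂ g (D x) x = 0 := by
  rw [kap_comm, ← trk_one]; exact hD x 1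

lemma kap_skew {D : Module.End ℂ g} (hD : D ∈ MM g) (x y : g) :
    killingForm ℂ g (D x) y = -killingForm ℂ g (D y) x := by
  have h := kap_self hD (x + y)
  simp only [map_add, LinearMap.add_apply, kap_self hD] at h
  linear_combination h

lemma sum_pow_zero {ι : Type*} [Fintype ι] [DecidableEq ι] (v c : ι → ℂ) (hv : Function.Injective v)
    (h : ∀ k : ℕ, ∑ i, v i ^ k * c i = 0) (i : ι) : c i = 0 := by
  have h1 : ∀ p : Polynomial ℂ, ∑ i, p.eval (v i) * c i = 0 := by
    intro p
    induction p using Polynomial.induction_on' with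
    | add p q hp hq => simp [add_mul, Finset.sum_add_distrib, hp, hq]
    | monomial n a =>
      simp only [Polynomial.eval_monomial, mul_assoc]
      rw [← Finset.mul_sum, h, mul_zero]
  have h2 := h1 (∏ j ∈ Finset.univ.erase i, (Polynomial.X - Polynomial.C (v j)))
  rw [Finset.sum_eq_single i] at h2
  · rcases mul_eq_zero.1 h2 with h3 | h3
    · rw [Polynomial.eval_prod, Finset.prod_eq_zero_iff] at h3
      obtain ⟨j, hj, h3⟩ := h3
      simp only [Polynomial.eval_sub, Polynomial.eval_X, Polynomial.eval_C] at h3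
      have := hv (sub_eq_zero.1 h3)
      simp [this] at hj
    · exact h3
  · intro j _ hj
    rw [Polynomial.eval_prod, Finset.prod_eq_zero (i := j), zero_mul]
    · simp [hj]
    · simp
  · simp

/-- the obstruction to being a derivation -/
def TT (D : Module.End ℂ g) (x y z : g) : ℂ :=
  killingForm ℂ g (D ⁅x, y⁆) z + killingForm ℂ g (D ⁅y, z⁆) x + killingForm ℂ g (D ⁅z, x⁆) y

lemma TT_cyc (D : Module.End ℂ g) (x y z : g) : TT D x y z = TT D y z x := by
  unfold TT; ring

lemma TT_swap (D : Module.End ℂ g) (x y z : g) : TT D x y z = - TT D y x z := by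
  unfold TT
  rw [← lie_skew x y, ← lie_skew y z, ← lie_skew z x]
  simp only [map_neg, LinearMap.neg_apply]
  ring

lemma TT_swap' (D : Module.End ℂ g) (x y z : g) : TT D x y z = - TT D x z y := by
  rw [TT_cyc, TT_swap, TT_cyc, TT_cyc, ← TT_cyc]

lemma TT_add (D : Module.End ℂ g) (x x' y z : g) : TT D (x + x') y z = TT D x y z + TT D x' y z := by
  unfold TT
  simp only [add_lie, lie_add, map_add, LinearMap.add_apply]
  ring

lemma TT_smul (D : Module.End ℂ g) (c : ℂ) (x y z : g) : TT D (c • x) y z = c * TT D x y z := by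
  unfold TT
  simp only [smul_lie, lie_smul, map_smul, LinearMap.smul_apply, smul_eq_mul]
  ring

lemma TT_br (D : Module.End ℂ g) (w x y z : g) :
    TT (br w D) x y z = -(TT D ⁅w, x⁆ y z + TT D x ⁅w, y⁆ z + TT D x y ⁅w, z⁆) := by
  have h1 : ∀ a b : g, killingForm ℂ g ⁅w, a⁆ b = - killingForm ℂ g a ⁅w, b⁆ := by
    intro a b
    rw [← lie_skew, map_neg, LinearMap.neg_apply, kap_inv]
  unfold TT
  simp only [br_apply, map_sub, LinearMap.sub_apply, h1]
  rw [leibniz_lie w x y, leibniz_lie w y z, leibniz_lie w z x]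
  simp only [map_add, LinearMap.add_apply]
  ring

namespace RootData
variable {t : LieSubalgebra ℂ g} (R : RootData g t)

lemma kap_te (h : t) (i : R.ι) : killingForm ℂ g (R.e i) (h : g) = 0 := by
  rw [kap_comm, ← trk_one, R.trk_e]

lemma kap_proj (x : g) (h : t) : killingForm ℂ g x (h : g) = killingForm ℂ g (R.proj x : g) (h : g) := by
  refine R.span_induct (p := fun x => killingForm ℂ g x (h : g) =
    killingForm ℂ g (R.proj x : g) (h : g)) ?_ ?_ ?_ ?_ x
  · intro k; rw [R.proj_t]
  · intro i; rw [R.proj_e, R.kap_te]; simp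
  · intro x y h1 h2
    rw [map_add, map_add, LinearMap.add_apply, h1, h2, tcoe_add, map_add, LinearMap.add_apply]
  · intro c x h1
    rw [map_smul, map_smul, LinearMap.smul_apply, h1, tcoe_smul, map_smul, LinearMap.smul_apply]

lemma trk_proj (k : ℕ) (x : g) (h : t) : trk k (h : g) x = trk k (h : g) (R.proj x : g) := by
  refine R.span_induct (p := fun x => trk k (h : g) x = trk k (h : g) (R.proj x : g)) ?_ ?_ ?_ ?_ x
  · intro k; rw [R.proj_t]
  · intro i; rw [R.proj_e, R.trk_e]; simp [trk]
  · intro x y h1 h2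
    rw [map_add, trk_add, h1, h2, tcoe_add, trk_add]
  · intro c x h1
    rw [map_smul, trk_smul, h1, tcoe_smul, trk_smul]

lemma proj_D {D : Module.End ℂ g} (hD : D ∈ MM g) (i : R.ι) (h : t) :
    R.α i (R.proj (D (h : g))) = 0 := by
  classical
  by_contra h0
  let L : Dual ℂ t := R.α i ∘ₗ R.proj ∘ₗ D ∘ₗ (t.incl : t →ₗ[ℂ] g)
  obtain ⟨k, hk⟩ := Module.Dual.exists_forall_ne_zero_of_forall_exists (K := ℂ) (M := t)
    (f := Sum.elim (fun p : {p : R.ι × R.ι // p.1 ≠ p.2} => R.α p.1.1 - R.α p.1.2)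
      (fun _ : Unit => L)) (by
      rintro (⟨p, hp⟩ | u)
      · by_contra! h1
        apply hp
        apply R.α_inj
        ext x
        exact sub_eq_zero.1 (h1 x)
      · exact ⟨h, h0⟩)
  apply hk (Sum.inr ())
  change R.α i (R.proj (D (k : g))) = 0
  refine sum_pow_zero (fun j => R.α j k) (fun j => R.α j (R.proj (D (k : g)))) ?_ ?_ i
  · intro a b hab
    by_contra hne
    exact hk (Sum.inl ⟨(a, b), hne⟩) (sub_eq_zero.2 hab)
  · intro n
    rw [← R.trk_t, ← R.trk_proj]
    exact hD k n

lemma kap_D {D : Module.End ℂ g} (R : RootData g t) (hD : D ∈ MM g) (h h' : t) :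
    killingForm ℂ g (D (h : g)) (h' : g) = 0 := by
  rw [R.kap_proj, ← trk_one, R.trk_t]
  simp [R.proj_D hD]

lemma lie_e' (h : t) (i : R.ι) : ⁅R.e i, (h : g)⁆ = (-R.α i h) • R.e i := by
  rw [← lie_skew, R.lie_e, neg_smul]

/-- two-sided induction -/
lemma TT_step1 (R : RootData g t) {D : Module.End ℂ g} (hD : D ∈ MM g) (h h' : t) (x : g) :
    TT D (h : g) (h' : g) x = 0 := by
  rw [← TT_cyc]
  refine R.span_induct (p := fun x => TT D x (h : g) (h' : g) = 0) ?_ ?_ ?_ ?_ x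
  · intro k; simp [TT, R.abel]
  · intro i
    have h1 := R.kap_D (br_mem_MM (R.e i) hD) h h'
    rw [br_apply, R.lie_e', map_sub, LinearMap.sub_apply, ← lie_skew, map_neg, LinearMap.neg_apply,
      kap_inv, R.lie_e', map_smul, map_smul, map_smul, LinearMap.smul_apply,
      kap_skew hD (h : g)] at h1
    simp only [smul_eq_mul] at h1
    rw [TT, R.lie_e', R.abel, R.lie_e, map_smul, map_smul, map_smul, map_smul]
    simp only [map_zero, LinearMap.zero_apply, LinearMap.smul_apply, smul_eq_mul]
    linear_combination -h1
  · intro x y h1 h2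
    rw [TT_add, h1, h2, add_zero]
  · intro c x h1
    rw [TT_smul, h1, mul_zero]

lemma TT_step2 (R : RootData g t) {D : Module.End ℂ g} (hD : D ∈ MM g) (h h' : t) (i : R.ι) (x : g) :
    R.α i h * TT D (h' : g) (R.e i) x = R.α i h' * TT D (h : g) (R.e i) x := by
  have h1 := R.TT_step1 (br_mem_MM (R.e i) hD) h h' x
  rw [TT_br, R.TT_step1 hD, R.lie_e', R.lie_e', TT_smul, TT_swap D (h : g), TT_smul,
    TT_swap D (R.e i) (h' : g), TT_swap D (R.e i) (h : g)] at h1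
  linear_combination -h1

lemma TT_step2' (R : RootData g t) {D : Module.End ℂ g} (hD : D ∈ MM g) (h : t) (i j : R.ι) :
    TT D (h : g) (R.e i) (R.e j) = 0 := by
  have hi : ∀ h : t, TT D (h : g) (R.e i) (R.e j) = R.α i h * (TT D (R.co i : g) (R.e i) (R.e j) / 2) := by
    intro h
    have := R.TT_step2 hD (R.co i) h i (R.e j)
    rw [R.α_co] at this
    linear_combination this / 2
  have hj : ∀ h : t, TT D (h : g) (R.e i) (R.e j) = R.α j h * (-TT D (R.co j : g) (R.e j) (R.e i) / 2) := by
    intro h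
    have := R.TT_step2 hD (R.co j) h j (R.e i)
    rw [R.α_co] at this
    rw [TT_swap']
    linear_combination -this / 2
  set a := TT D (R.co i : g) (R.e i) (R.e j) / 2 with ha
  set b := -TT D (R.co j : g) (R.e j) (R.e i) / 2 with hb
  by_cases hb0 : b = 0
  · rw [hj, hb0, mul_zero]
  have hp : R.α j = (a / b) • R.α i := by
    ext k
    have h1 := (hi k).symm.trans (hj k)
    simp only [LinearMap.smul_apply, smul_eq_mul]
    field_simp
    linear_combination -h1
  rcases R.propor i j _ hp with rfl | hneg
  · have := TT_swap' D (h : g) (R.e j) (R.e j)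
    linear_combination this / 2
  · obtain ⟨k, hk, hk0⟩ := R.lie_ee i j hneg
    have h1 : TT D (k : g) (R.e i) (R.e j) = 0 := by
      rw [TT, hk, kap_self hD, R.lie_e, R.lie_e', hneg, map_smul, map_smul, map_smul, map_smul,
        LinearMap.smul_apply, LinearMap.smul_apply, kap_skew hD (R.e i)]
      simp
    rw [hi] at h1
    have ha0 : a = 0 := by simpa [hk0] using h1
    rw [hi, ha0, mul_zero]

lemma TT_step3 (R : RootData g t) {D : Module.End ℂ g} (hD : D ∈ MM g) (h : t) (x y : g) :
    TT D (h : g) x y = 0 := by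
  rw [TT_cyc]
  refine R.span_induct (p := fun x => TT D x y (h : g) = 0) ?_ ?_ ?_ ?_ x
  · intro k; rw [← TT_cyc]; exact R.TT_step1 hD _ _ _
  · intro i
    rw [TT_cyc]
    refine R.span_induct (p := fun y => TT D y (h : g) (R.e i) = 0) ?_ ?_ ?_ ?_ y
    · intro k; exact R.TT_step1 hD _ _ _
    · intro j; rw [TT_cyc]; exact R.TT_step2' hD _ _ _
    · intro x y h1 h2
      rw [TT_add, h1, h2, add_zero]
    · intro c x h1
      rw [TT_smul, h1, mul_zero]
  · intro x y h1 h2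
    rw [TT_add, h1, h2, add_zero]
  · intro c x h1
    rw [TT_smul, h1, mul_zero]

lemma TT_zero (R : RootData g t) {D : Module.End ℂ g} (hD : D ∈ MM g) (x y z : g) :
    TT D x y z = 0 := by
  refine R.span_induct (p := fun x => TT D x y z = 0) ?_ ?_ ?_ ?_ x
  · intro k; exact R.TT_step3 hD _ _ _
  · intro i
    have h1 := R.TT_step3 (br_mem_MM (R.e i) hD) (R.co i) y z
    rw [TT_br, R.TT_step3 hD, R.TT_step3 hD, R.lie_e', TT_smul, R.α_co] at h1
    linear_combination h1 / 2
  · intro x y h1 h2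
    rw [TT_add, h1, h2, add_zero]
  · intro c x h1
    rw [TT_smul, h1, mul_zero]

end RootData

variable [LieAlgebra.IsSimple ℂ g]

lemma kap_nondeg {x : g} (h : ∀ y, killingForm ℂ g x y = 0) : x = 0 := by
  have h1 : x ∈ LinearMap.ker (killingForm ℂ g) := LinearMap.mem_ker.2 (LinearMap.ext h)
  rw [LieAlgebra.IsKilling.ker_killingForm_eq_bot] at h1
  exact h1

lemma MM_inner {t : LieSubalgebra ℂ g} (R : RootData g t) {D : Module.End ℂ g} (hD : D ∈ MM g) :
    ∃ z, D = ad ℂ g z := by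
  have hder : ∀ y z, D ⁅y, z⁆ = ⁅y, D z⁆ - ⁅z, D y⁆ := by
    intro y z
    rw [← sub_eq_zero]
    apply kap_nondeg
    intro x
    have h1 := R.TT_zero hD x y z
    rw [TT, kap_skew hD ⁅x, y⁆, kap_skew hD ⁅z, x⁆] at h1
    have e1 : killingForm ℂ g ⁅y, D z⁆ x = killingForm ℂ g (D z) ⁅x, y⁆ := by
      rw [← lie_skew, map_neg, LinearMap.neg_apply, kap_inv, ← lie_skew, map_neg, neg_neg]
    have e2 : killingForm ℂ g ⁅z, D y⁆ x = - killingForm ℂ g (D y) ⁅z, x⁆ := by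
      rw [← lie_skew, map_neg, LinearMap.neg_apply, kap_inv]
    rw [map_sub, map_sub, LinearMap.sub_apply, LinearMap.sub_apply, e1, e2]
    linear_combination h1
  let D' : LieDerivation ℂ g g := { toLinearMap := D, leibniz' := hder }
  obtain ⟨z, hz⟩ := LieDerivation.IsKilling.exists_eq_ad D'
  refine ⟨z, ?_⟩
  ext x
  have : LieDerivation.ad ℂ g z x = D' x := by rw [hz]
  rw [← LieDerivation.coeFn_coe, LieDerivation.coe_ad_apply_eq_ad_apply] at this
  exact this.symm

lemma ad_inj {x y : g} (h : ad ℂ g x = ad ℂ g y) : x = y := by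
  rw [← sub_eq_zero]
  apply kap_nondeg
  intro z
  have : ad ℂ g (x - y) = 0 := by rw [map_sub, h, sub_self]
  rw [← trk_one, trk, this]
  simp

lemma exists_aut (t : LieSubalgebra ℂ g) [t.IsCartanSubalgebra] {φ : g ≃ₗ[ℂ] g}
    (hφ : φ ∈ primeGroup (adjointGroup g)) :
    ∃ σ : g ≃ₗ[ℂ] g, IsLieAut σ ∧ ((∀ x, φ x = σ x) ∨ ∀ x, φ x = -σ x) := by
  obtain ⟨R⟩ := exists_rootData g t
  have h1 : ∀ x, ∃ z, φ.conj (ad ℂ g x) = ad ℂ g z := fun x =>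
    MM_inner R (conj_mem_MM hφ (ad_mem_MM x))
  choose s hs using h1
  have hs' : ∀ x y, φ ⁅x, y⁆ = ⁅s x, φ y⁆ := by
    intro x y
    have := LinearMap.congr_fun (hs x) (φ y)
    rw [LinearEquiv.conj_apply_apply] at this
    simpa using this
  let s' : g →ₗ[ℂ] g :=
    { toFun := s
      map_add' := fun x y => ad_inj (by rw [map_add, ← hs, ← hs, ← hs, map_add, map_add])
      map_smul' := fun c x => ad_inj (by
        rw [RingHom.id_apply, map_smul, ← hs, ← hs, map_smul, map_smul]) }
  have hinj : Function.Injective s' := by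
    intro x y hxy
    apply ad_inj
    apply φ.conj.injective
    rw [hs, hs]
    exact congrArg (ad ℂ g) hxy
  let σ := LinearEquiv.ofInjectiveEndo s' hinj
  have hσs : ∀ x, σ x = s x := fun x => rfl
  have hσ : IsLieAut σ := by
    intro x y
    rw [hσs, hσs, hσs]
    apply ad_inj
    ext z
    obtain ⟨w, rfl⟩ := φ.surjective z
    rw [ad_apply, ad_apply, ← hs', lie_lie, lie_lie, map_sub, hs', hs', hs', hs']
  have hθ : ∀ x y : g, σ.symm (φ ⁅x, y⁆) = ⁅x, σ.symm (φ y)⁆ := by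
    intro x y
    rw [hs', LinearEquiv.symm_apply_eq, hσ, LinearEquiv.apply_symm_apply, hσs]
  let θ : Module.End ℂ g := (φ.trans σ.symm).toLinearMap
  have hθ' : ∀ x y : g, θ ⁅x, y⁆ = ⁅x, θ y⁆ := hθ
  have hnt : Nontrivial g := by
    by_contra hne
    rw [not_nontrivial_iff_subsingleton] at hne
    exact LieAlgebra.IsSimple.non_abelian (L := g) ℂ ⟨fun x y => Subsingleton.elim _ _⟩
  obtain ⟨c, hc⟩ := Module.End.exists_eigenvalue θ
  let I : LieIdeal ℂ g :=
    { Module.End.eigenspace θ c with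
      lie_mem := by
        intro x m hm
        have hm' : θ m = c • m := Module.End.mem_eigenspace_iff.1 hm
        apply Module.End.mem_eigenspace_iff.2
        rw [hθ', hm', lie_smul] }
  have hI : I = ⊤ := by
    rcases LieAlgebra.IsSimple.eq_bot_or_eq_top (R := ℂ) I with h | h
    · exfalso
      obtain ⟨v, hv, hv0⟩ := hc.exists_hasEigenvector
      have hvI : v ∈ I := hv
      rw [h] at hvI
      exact hv0 hvI
    · exact h
  have hφc : ∀ x, φ x = c • σ x := by
    intro x
    have hx : x ∈ I := by rw [hI]; trivial
    have hx' : θ x = c • x := Module.End.mem_eigenspace_iff.1 hx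
    have : σ (θ x) = φ x := LinearEquiv.apply_symm_apply σ (φ x)
    rw [← this, hx', map_smul]
  have hc2 : c * c = 1 := by
    obtain ⟨x, hx⟩ := exists_ne (0 : g)
    have : ∃ y, killingForm ℂ g x y ≠ 0 := by
      by_contra! h0
      exact hx (kap_nondeg h0)
    obtain ⟨y, hy⟩ := this
    have e1 := trk_prime hφ 1 x y
    have e2 : trk 1 (σ x) (σ y) = trk 1 x y := by
      rw [trk, hσ.conj_ad, hσ.conj_ad, conj_pow']
      change LinearMap.trace ℂ g (σ.conj _ ∘ₗ σ.conj _) = _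
      rw [← LinearEquiv.conj_comp, LinearMap.trace_conj']
      rfl
    rw [← trk_one] at hy
    rw [hφc, hφc, trk_smul, trk_one, map_smul, LinearMap.smul_apply, ← trk_one, e2, smul_eq_mul] at e1
    have e3 : (c * c - 1) * trk 1 x y = 0 := by linear_combination e1
    rcases mul_eq_zero.1 e3 with h | h
    · linear_combination h
    · exact absurd h hy
  refine ⟨σ, hσ, ?_⟩
  rcases mul_self_eq_one_iff.1 hc2 with rfl | rfl
  · left; intro x; rw [hφc, one_smul]
  · right; intro x; rw [hφc, neg_smul, one_smul]

end PartE2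
end

/-- Let `g` be a complex simple Lie algebra and `G = Aut(g)⁰` its
adjoint group acting on `V = g`.  Then `G` is a normal subgroup of `G'`, the quotient
`G'/G` has order 2, and `G'/G` is generated by the coset of `-ψ`, where `ψ` is the
Chevalley involution.  In particular `-ψ ∈ G'` and `-ψ ∉ G`. -/
theorem stmt7 (g : Type) [LieRing g] [LieAlgebra ℂ g] [FiniteDimensional ℂ g]
    [LieAlgebra.IsSimple ℂ g]
    (t : LieSubalgebra ℂ g) [t.IsCartanSubalgebra]
    -- the Chevalley involution `ψ`
    (ψ : g ≃ₗ⁅ℂ⁆ g) (hψ2 : ∀ x : g, ψ (ψ x) = x) (hψt : ∀ x ∈ t, ψ x = -x)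
    -- the linear map `-ψ`
    (negψ : g ≃ₗ[ℂ] g) (hnegψ : negψ = ψ.toLinearEquiv.trans (LinearEquiv.neg ℂ)) :
    -- `G ⊆ G'` and `G` is normal in `G'`
    adjointGroup g ≤ primeGroup (adjointGroup g) ∧
    (∀ φ ∈ primeGroup (adjointGroup g), ∀ u ∈ adjointGroup g,
      φ * u * φ⁻¹ ∈ adjointGroup g) ∧
    -- `-ψ ∈ G'`, `-ψ ∉ G`
    negψ ∈ primeGroup (adjointGroup g) ∧ negψ ∉ adjointGroup g ∧
    -- `G'/G` has order 2, generated by the coset of `-ψ`: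
    -- every element of `G'` lies in `G` or in `(-ψ)·G`
    (∀ φ ∈ primeGroup (adjointGroup g),
      φ ∈ adjointGroup g ∨ ∃ u ∈ adjointGroup g, φ = negψ * u) := by
  have hle : adjointGroup g ≤ primeGroup (adjointGroup g) := fun u hu f _ hinv v => hinv u hu v
  have hn : ∀ x, negψ x = - ψ x := by
    intro x
    rw [hnegψ]
    rfl
  have hψ : IsLieAut ψ.toLinearEquiv := fun x y => LieEquiv.map_lie ψ x y
  have hnp : negψ ∈ primeGroup (adjointGroup g) := neg_mem_prime t hψ hψt hn
  refine ⟨hle, ?_, hnp, ?_, ?_⟩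
  · intro φ hφ u hu
    obtain ⟨σ, hσ, h | h⟩ := exists_aut t hφ
    · have : φ = σ := LinearEquiv.ext h
      rw [this]
      exact conj_mem hσ hu
    · have : φ * u * φ⁻¹ = σ * u * σ⁻¹ := by
        rw [mul_inv_eq_iff_eq_mul]
        ext x
        change φ (u x) = σ (u (σ⁻¹ (φ x)))
        rw [h, h, map_neg, map_neg, map_neg, inv_apply_self']
      rw [this]
      exact conj_mem hσ hu
  · intro hmem
    have h1 := isLieAut_of_mem hmem
    refine LieAlgebra.IsSimple.non_abelian (L := g) ℂ ⟨fun (x y : g) => ?_⟩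
    have h2 := h1 x y
    rw [hn, hn, hn, neg_lie, lie_neg, neg_neg, ← LieEquiv.map_lie, neg_eq_iff_add_eq_zero,
      ← two_smul ℂ, smul_eq_zero] at h2
    have h3 : ψ ⁅x, y⁆ = 0 := h2.resolve_left two_ne_zero
    rw [← hψ2 ⁅x, y⁆, h3]
    exact map_zero ψ.toLinearEquiv
  · intro φ hφ
    obtain ⟨σ, hσ, h | h⟩ := exists_aut t hφ
    · left
      have : φ = σ := LinearEquiv.ext h
      rw [this] at hφ ⊢
      exact mem_of_aut_prime t hσ hφ
    · right
      refine ⟨negψ⁻¹ * φ, ?_, (mul_inv_cancel_left _ _).symm⟩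
      refine mem_of_aut_prime t ?_ (mul_mem (inv_mem hnp) hφ)
      have : negψ⁻¹ * φ = (ψ.toLinearEquiv : g ≃ₗ[ℂ] g)⁻¹ * σ := by
        rw [inv_mul_eq_iff_eq_mul]
        ext x
        rw [mul_apply', hn, h]
        congr 1
        exact (apply_inv_self' (ψ.toLinearEquiv : g ≃ₗ[ℂ] g) (σ x)).symm
      rw [this]
      exact hψ.inv.mul hσ
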